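/- A priori regularity of Neumann eigenfunctions on convex domains: let Ω ⊆ ℝ² be a bounded convex open set whose boundary is piecewise smooth, h > 0, and let φ be C^∞ on Ω with φ ∈ L²(Ω), ∇φ ∈ L²(Ω), satisfying −h²Δφ = φ on Ω and the weak Neumann condition: h² ∫_Ω ⟨∇φ, ∇v⟩ dV = ∫_Ω φ v dV for every v ∈ C^∞(ℝ²) that is bounded with bounded gradient. Then (1) all second partial derivatives of φ belong to L²(Ω) (i.e. φ ∈ H²(Ω)), and (2) φ is bounded on Ω: there exists a constant C_h (depending on h) with |φ(x)| ≤ C_h for all x ∈ Ω. -/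

import Mathlib

open MeasureTheory Set

noncomputable section

/-- The open Euclidean ball of radius `r` centered at `p` in `ℝ × ℝ`. -/
def EBall (p : ℝ × ℝ) (r : ℝ) : Set (ℝ × ℝ) :=
  {q : ℝ × ℝ | (q.1 - p.1) ^ 2 + (q.2 - p.2) ^ 2 < r ^ 2}

/-- Partial derivative in the `x` direction. -/
def pdx (φ : ℝ × ℝ → ℝ) (p : ℝ × ℝ) : ℝ := fderiv ℝ φ p (1, 0)

/-- Partial derivative in the `y` direction. -/
def pdy (φ : ℝ × ℝ → ℝ) (p : ℝ × ℝ) : ℝ := fderiv ℝ φ p (0, 1)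

/-- The Laplacian `Δ = ∂²/∂x² + ∂²/∂y²`. -/
def lap (φ : ℝ × ℝ → ℝ) (p : ℝ × ℝ) : ℝ := pdx (pdx φ) p + pdy (pdy φ) p

/-- `|∇φ|²`. -/
def gradSq (φ : ℝ × ℝ → ℝ) (p : ℝ × ℝ) : ℝ := (pdx φ p) ^ 2 + (pdy φ p) ^ 2

/-- A bounded convex open planar domain whose boundary is piecewise smooth:
`∂Ω = ⋃ Γ_j`, each arc `Γ_j` contained in the zero set of a smooth defining function
`f_j` with nonvanishing differential, consecutive arcs meeting at corner points where the
two differentials are linearly independent. -/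
structure PSConvexDomain where
  Ω : Set (ℝ × ℝ)
  isOpen : IsOpen Ω
  convex : Convex ℝ Ω
  bounded : Bornology.IsBounded Ω
  nonempty : Ω.Nonempty
  N : ℕ
  Npos : 0 < N
  Γ : Fin N → Set (ℝ × ℝ)
  f : Fin N → ℝ × ℝ → ℝ
  f_smooth : ∀ j, ContDiff ℝ (⊤ : ℕ∞) (f j)
  boundary_eq : frontier Ω = ⋃ j, Γ j
  Γ_closed : ∀ j, IsClosed (Γ j)
  Γ_sub : ∀ j, Γ j ⊆ {x : ℝ × ℝ | f j x = 0 ∧ fderiv ℝ (f j) x ≠ 0}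
  corner : Fin N → ℝ × ℝ
  corner_eq : ∀ j, Γ j ∩ Γ (j + ⟨1 % N, Nat.mod_lt 1 Npos⟩) = {corner j}
  corner_rank : ∀ j,
    LinearIndependent ℝ
      ![fderiv ℝ (f j) (corner j), fderiv ℝ (f (j + ⟨1 % N, Nat.mod_lt 1 Npos⟩)) (corner j)]

/-- The (finite) set of corner points. -/
def PSConvexDomain.corners (D : PSConvexDomain) : Set (ℝ × ℝ) := Set.range D.corner

/-- A (real-valued) semiclassical Neumann eigenfunction with parameter `h > 0`:
smooth in `Ω` and up to the boundary away from corners, bounded on the closure,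
`L²`-normalized, with finite Dirichlet energy, satisfying `-h²Δφ = φ` pointwise in `Ω`
and the Neumann boundary condition at every non-corner boundary point. -/
structure IsNeumannEF (D : PSConvexDomain) (h : ℝ) (φ : ℝ × ℝ → ℝ) : Prop where
  smooth_int : ContDiffOn ℝ (⊤ : ℕ∞) φ D.Ω
  smooth_bdy : ContDiffOn ℝ (⊤ : ℕ∞) φ (closure D.Ω \ D.corners)
  bounded : ∃ M : ℝ, ∀ p ∈ closure D.Ω, |φ p| ≤ M
  normalized : ∫ p in D.Ω, (φ p) ^ 2 = 1
  grad_int : IntegrableOn (gradSq φ) D.Ω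
  eigen : ∀ p ∈ D.Ω, -(h ^ 2) * lap φ p = φ p
  neumann : ∀ p ∈ frontier D.Ω \ D.corners, ∀ ν : ℝ × ℝ,
      ν.1 ^ 2 + ν.2 ^ 2 = 1 →
      (∀ q ∈ D.Ω, ν.1 * (q.1 - p.1) + ν.2 * (q.2 - p.2) ≤ 0) →
      fderivWithin ℝ φ (closure D.Ω) p ν = 0


/-! ### Calculus for smooth functions of two variables -/

/-- Smooth functions on the plane. -/
abbrev Sm (f : ℝ × ℝ → ℝ) : Prop := ContDiff ℝ ((⊤ : ℕ∞) : WithTop ℕ∞) f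

protected lemma Sm.pdx {f : ℝ × ℝ → ℝ} (hf : Sm f) : Sm (pdx f) := by
  unfold _root_.pdx
  exact (hf.fderiv_right (m := ((⊤ : ℕ∞) : WithTop ℕ∞)) (by simp)).clm_apply contDiff_const

protected lemma Sm.pdy {f : ℝ × ℝ → ℝ} (hf : Sm f) : Sm (pdy f) := by
  unfold _root_.pdy
  exact (hf.fderiv_right (m := ((⊤ : ℕ∞) : WithTop ℕ∞)) (by simp)).clm_apply contDiff_const

protected lemma Sm.diff {f : ℝ × ℝ → ℝ} (hf : Sm f) : Differentiable ℝ f :=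
  hf.differentiable (by simp)

protected lemma Sm.lap {f : ℝ × ℝ → ℝ} (hf : Sm f) : Sm (lap f) := hf.pdx.pdx.add hf.pdy.pdy

lemma pdx_add {f g : ℝ × ℝ → ℝ} (hf : Sm f) (hg : Sm g) (p : ℝ × ℝ) :
    pdx (fun q => f q + g q) p = pdx f p + pdx g p := by
  unfold pdx
  rw [fderiv_fun_add (hf.diff p) (hg.diff p)]; rfl

lemma pdy_add {f g : ℝ × ℝ → ℝ} (hf : Sm f) (hg : Sm g) (p : ℝ × ℝ) :
    pdy (fun q => f q + g q) p = pdy f p + pdy g p := by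
  unfold pdy
  rw [fderiv_fun_add (hf.diff p) (hg.diff p)]; rfl

lemma pdx_sub {f g : ℝ × ℝ → ℝ} (hf : Sm f) (hg : Sm g) (p : ℝ × ℝ) :
    pdx (fun q => f q - g q) p = pdx f p - pdx g p := by
  unfold pdx
  rw [fderiv_fun_sub (hf.diff p) (hg.diff p)]; rfl

lemma pdy_sub {f g : ℝ × ℝ → ℝ} (hf : Sm f) (hg : Sm g) (p : ℝ × ℝ) :
    pdy (fun q => f q - g q) p = pdy f p - pdy g p := by
  unfold pdy
  rw [fderiv_fun_sub (hf.diff p) (hg.diff p)]; rfl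

lemma pdx_neg {f : ℝ × ℝ → ℝ} (p : ℝ × ℝ) :
    pdx (fun q => - f q) p = - pdx f p := by
  unfold pdx
  rw [fderiv_fun_neg]; rfl

lemma pdy_neg {f : ℝ × ℝ → ℝ} (p : ℝ × ℝ) :
    pdy (fun q => - f q) p = - pdy f p := by
  unfold pdy
  rw [fderiv_fun_neg]; rfl

lemma pdx_mul {f g : ℝ × ℝ → ℝ} (hf : Sm f) (hg : Sm g) (p : ℝ × ℝ) :
    pdx (fun q => f q * g q) p = pdx f p * g p + f p * pdx g p := by
  unfold pdx
  rw [fderiv_fun_mul (hf.diff p) (hg.diff p)]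
  simp; ring

lemma pdy_mul {f g : ℝ × ℝ → ℝ} (hf : Sm f) (hg : Sm g) (p : ℝ × ℝ) :
    pdy (fun q => f q * g q) p = pdy f p * g p + f p * pdy g p := by
  unfold pdy
  rw [fderiv_fun_mul (hf.diff p) (hg.diff p)]
  simp; ring

lemma pdx_const_mul {f : ℝ × ℝ → ℝ} (hf : Sm f) (c : ℝ) (p : ℝ × ℝ) :
    pdx (fun q => c * f q) p = c * pdx f p := by
  unfold pdx
  rw [fderiv_const_mul (hf.diff p)]; rfl

lemma pdy_const_mul {f : ℝ × ℝ → ℝ} (hf : Sm f) (c : ℝ) (p : ℝ × ℝ) :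
    pdy (fun q => c * f q) p = c * pdy f p := by
  unfold pdy
  rw [fderiv_const_mul (hf.diff p)]; rfl

/-- Chain rule with a scalar outer function. -/
lemma pdx_comp {s : ℝ → ℝ} {f : ℝ × ℝ → ℝ} (hs : Differentiable ℝ s) (hf : Sm f) (p : ℝ × ℝ) :
    pdx (fun q => s (f q)) p = deriv s (f p) * pdx f p := by
  unfold pdx
  have := ((hs (f p)).hasDerivAt.comp_hasFDerivAt p (hf.diff p).hasFDerivAt).fderiv
  simp only [Function.comp_def] at this
  rw [this]; simp

lemma pdy_comp {s : ℝ → ℝ} {f : ℝ × ℝ → ℝ} (hs : Differentiable ℝ s) (hf : Sm f) (p : ℝ × ℝ) :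
    pdy (fun q => s (f q)) p = deriv s (f p) * pdy f p := by
  unfold pdy
  have := ((hs (f p)).hasDerivAt.comp_hasFDerivAt p (hf.diff p).hasFDerivAt).fderiv
  simp only [Function.comp_def] at this
  rw [this]; simp

lemma pdx_exp {f : ℝ × ℝ → ℝ} (hf : Sm f) (p : ℝ × ℝ) :
    pdx (fun q => Real.exp (f q)) p = Real.exp (f p) * pdx f p := by
  rw [pdx_comp Real.differentiable_exp hf]; simp

lemma pdy_exp {f : ℝ × ℝ → ℝ} (hf : Sm f) (p : ℝ × ℝ) :
    pdy (fun q => Real.exp (f q)) p = Real.exp (f p) * pdy f p := by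
  rw [pdy_comp Real.differentiable_exp hf]; simp

/-- Symmetry of second derivatives. -/
lemma pdx_pdy_comm {f : ℝ × ℝ → ℝ} {p : ℝ × ℝ} (hf : ContDiffAt ℝ ((⊤ : ℕ∞) : WithTop ℕ∞) f p) :
    pdx (pdy f) p = pdy (pdx f) p := by
  have h2 : ContDiffAt ℝ 2 f p := hf.of_le (show ((2 : ℕ∞) : WithTop ℕ∞) ≤ _ from WithTop.coe_le_coe.2 le_top)
  have hsym := h2.isSymmSndFDerivAt (by simp)
  have hd : DifferentiableAt ℝ (fderiv ℝ f) p :=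
    (h2.fderiv_right (m := 1) (by norm_num)).differentiableAt (by simp)
  unfold pdx pdy
  rw [fderiv_clm_apply hd (differentiableAt_const _), fderiv_clm_apply hd (differentiableAt_const _)]
  simpa using hsym (1, 0) (0, 1)

protected lemma Sm.comm {f : ℝ × ℝ → ℝ} (hf : Sm f) (p : ℝ × ℝ) : pdx (pdy f) p = pdy (pdx f) p :=
  pdx_pdy_comm hf.contDiffAt

lemma pdx_eq_zero {f : ℝ × ℝ → ℝ} {p : ℝ × ℝ} (hp : p ∉ tsupport f) : pdx f p = 0 := by
  unfold pdx
  rw [fderiv_of_notMem_tsupport ℝ hp]; rfl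

lemma pdy_eq_zero {f : ℝ × ℝ → ℝ} {p : ℝ × ℝ} (hp : p ∉ tsupport f) : pdy f p = 0 := by
  unfold pdy
  rw [fderiv_of_notMem_tsupport ℝ hp]; rfl

lemma tsupport_pdx {f : ℝ × ℝ → ℝ} : tsupport (pdx f) ⊆ tsupport f := by
  apply closure_minimal _ (isClosed_tsupport f)
  intro p hp
  by_contra h
  exact hp (pdx_eq_zero h)

lemma tsupport_pdy {f : ℝ × ℝ → ℝ} : tsupport (pdy f) ⊆ tsupport f := by
  apply closure_minimal _ (isClosed_tsupport f)
  intro p hp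
  by_contra h
  exact hp (pdy_eq_zero h)

protected lemma HasCompactSupport.pdx {f : ℝ × ℝ → ℝ} (hf : HasCompactSupport f) :
    HasCompactSupport (pdx f) := by
  exact IsCompact.of_isClosed_subset hf (isClosed_tsupport _) tsupport_pdx

protected lemma HasCompactSupport.pdy {f : ℝ × ℝ → ℝ} (hf : HasCompactSupport f) :
    HasCompactSupport (pdy f) := by
  exact IsCompact.of_isClosed_subset hf (isClosed_tsupport _) tsupport_pdy

lemma integrable_of_smc {f : ℝ × ℝ → ℝ} (hf : Sm f) (hc : HasCompactSupport f) :
    Integrable f := hf.continuous.integrable_of_hasCompactSupport hc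

lemma integral_pdx {f : ℝ × ℝ → ℝ} (hf : Sm f) (hc : HasCompactSupport f) :
    ∫ p, pdx f p = 0 := by
  have h := integral_mul_fderiv_eq_neg_fderiv_mul_of_integrable (𝕜 := ℝ)
    (μ := (volume : Measure (ℝ × ℝ)))
    (f := fun _ => (1 : ℝ)) (g := f) (v := ((1, 0) : ℝ × ℝ)) (by simp)
    (by simpa [pdx] using! integrable_of_smc hf.pdx hc.pdx)
    (by simpa using integrable_of_smc hf hc) (fun _ _ => differentiableAt_const _)
    (fun x _ => hf.diff x)
  simpa [pdx] using h

lemma integral_pdy {f : ℝ × ℝ → ℝ} (hf : Sm f) (hc : HasCompactSupport f) :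
    ∫ p, pdy f p = 0 := by
  have h := integral_mul_fderiv_eq_neg_fderiv_mul_of_integrable (𝕜 := ℝ)
    (μ := (volume : Measure (ℝ × ℝ)))
    (f := fun _ => (1 : ℝ)) (g := f) (v := ((0, 1) : ℝ × ℝ)) (by simp)
    (by simpa [pdy] using! integrable_of_smc hf.pdy hc.pdy)
    (by simpa using integrable_of_smc hf hc) (fun _ _ => differentiableAt_const _)
    (fun x _ => hf.diff x)
  simpa [pdy] using h

/-- Divergence theorem without boundary. -/
lemma integral_div {X Y : ℝ × ℝ → ℝ} (hX : Sm X) (hY : Sm Y) (hcX : HasCompactSupport X)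
    (hcY : HasCompactSupport Y) : ∫ p, (pdx X p + pdy Y p) = 0 := by
  rw [integral_add (integrable_of_smc hX.pdx hcX.pdx) (integrable_of_smc hY.pdy hcY.pdy),
    integral_pdx hX hcX, integral_pdy hY hcY, add_zero]

/-- The drift operator `1 + L`, `L u = -Δu + ∇V·∇u`. -/
def opL (V u : ℝ × ℝ → ℝ) (p : ℝ × ℝ) : ℝ :=
  u p - (pdx (pdx u) p + pdy (pdy u) p) + (pdx V p * pdx u p + pdy V p * pdy u p)

/-- Second order energy density. -/
def hess2 (u : ℝ × ℝ → ℝ) (p : ℝ × ℝ) : ℝ :=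
  (pdx (pdx u) p) ^ 2 + (pdx (pdy u) p) ^ 2 + (pdy (pdx u) p) ^ 2 + (pdy (pdy u) p) ^ 2

protected lemma Sm.opL {V u : ℝ × ℝ → ℝ} (hV : Sm V) (hu : Sm u) : Sm (opL V u) :=
  (hu.sub (hu.pdx.pdx.add hu.pdy.pdy)).add ((hV.pdx.mul hu.pdx).add (hV.pdy.mul hu.pdy))

protected lemma Sm.hess2 {u : ℝ × ℝ → ℝ} (hu : Sm u) : Sm (hess2 u) :=
  (((hu.pdx.pdx.pow 2).add (hu.pdy.pdx.pow 2)).add (hu.pdx.pdy.pow 2)).add (hu.pdy.pdy.pow 2)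

protected lemma Sm.gradSq {u : ℝ × ℝ → ℝ} (hu : Sm u) : Sm (gradSq u) :=
  (hu.pdx.pow 2).add (hu.pdy.pow 2)

protected lemma Sm.weight {V : ℝ × ℝ → ℝ} (hV : Sm V) : Sm (fun p => Real.exp (-V p)) :=
  hV.neg.exp

protected lemma Sm.whalf {V : ℝ × ℝ → ℝ} (hV : Sm V) : Sm (fun p => Real.exp (-V p / 2)) :=
  (hV.neg.div_const 2).exp

/-- Everything vanishes off the support. -/
lemma all_zero {u : ℝ × ℝ → ℝ} {p : ℝ × ℝ} (hp : p ∉ tsupport u) :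
    u p = 0 ∧ pdx u p = 0 ∧ pdy u p = 0 ∧ pdx (pdx u) p = 0 ∧ pdx (pdy u) p = 0 ∧
    pdy (pdx u) p = 0 ∧ pdy (pdy u) p = 0 :=
  ⟨image_eq_zero_of_notMem_tsupport hp, pdx_eq_zero hp, pdy_eq_zero hp,
    pdx_eq_zero fun h => hp (tsupport_pdx h), pdx_eq_zero fun h => hp (tsupport_pdy h),
    pdy_eq_zero fun h => hp (tsupport_pdx h), pdy_eq_zero fun h => hp (tsupport_pdy h)⟩

/-- Weighted Green formula. -/
lemma green {V u v : ℝ × ℝ → ℝ} (hV : Sm V) (hu : Sm u) (hv : Sm v)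
    (hc : HasCompactSupport v) :
    ∫ p, v p * opL V u p * Real.exp (-V p) =
      ∫ p, (pdx u p * pdx v p + pdy u p * pdy v p + u p * v p) * Real.exp (-V p) := by
  have hX : Sm (fun p => v p * pdx u p * Real.exp (-V p)) := (hv.mul hu.pdx).mul hV.weight
  have hY : Sm (fun p => v p * pdy u p * Real.exp (-V p)) := (hv.mul hu.pdy).mul hV.weight
  have hcX : HasCompactSupport (fun p => v p * pdx u p * Real.exp (-V p)) :=
    HasCompactSupport.intro hc fun p hp => by simp [(all_zero hp).1]
  have hcY : HasCompactSupport (fun p => v p * pdy u p * Real.exp (-V p)) :=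
    HasCompactSupport.intro hc fun p hp => by simp [(all_zero hp).1]
  have h0 := integral_div hX hY hcX hcY
  have h1 : Integrable (fun p => v p * opL V u p * Real.exp (-V p)) :=
    integrable_of_smc ((hv.mul (Sm.opL hV hu)).mul hV.weight)
      (HasCompactSupport.intro hc fun p hp => by simp [(all_zero hp).1])
  have h2 : Integrable (fun p => (pdx u p * pdx v p + pdy u p * pdy v p + u p * v p) *
      Real.exp (-V p)) :=
    integrable_of_smc ((((hu.pdx.mul hv.pdx).add (hu.pdy.mul hv.pdy)).add (hu.mul hv)).mul hV.weight)
      (HasCompactSupport.intro hc fun p hp => by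
        obtain ⟨a, b, c, -⟩ := all_zero hp
        simp [a, b, c])
  rw [← sub_eq_zero, ← neg_eq_zero, ← h0, ← integral_sub h1 h2, ← integral_neg]
  congr 1
  ext p
  have e1 : pdx (fun p => v p * pdx u p * Real.exp (-V p)) p = _ := pdx_mul (hv.mul hu.pdx) hV.weight p
  have e2 : pdy (fun p => v p * pdy u p * Real.exp (-V p)) p = _ := pdy_mul (hv.mul hu.pdy) hV.weight p
  rw [e1, e2, pdx_mul hv hu.pdx, pdy_mul hv hu.pdy, pdx_exp hV.neg, pdy_exp hV.neg, pdx_neg, pdy_neg]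
  unfold opL
  ring



/-! ### The weighted Bochner inequality -/

lemma pdx_opL {V u : ℝ × ℝ → ℝ} (hV : Sm V) (hu : Sm u) (p : ℝ × ℝ) :
    pdx (opL V u) p = pdx u p - (pdx (pdx (pdx u)) p + pdx (pdy (pdy u)) p) +
      (pdx (pdx V) p * pdx u p + pdx V p * pdx (pdx u) p +
        (pdx (pdy V) p * pdy u p + pdy V p * pdx (pdy u) p)) := by
  show pdx (fun q => (u q - (pdx (pdx u) q + pdy (pdy u) q)) +
    (pdx V q * pdx u q + pdy V q * pdy u q)) p = _
  rw [pdx_add (hu.sub (hu.pdx.pdx.add hu.pdy.pdy)) ((hV.pdx.mul hu.pdx).add (hV.pdy.mul hu.pdy)),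
    pdx_sub hu (hu.pdx.pdx.add hu.pdy.pdy), pdx_add hu.pdx.pdx hu.pdy.pdy,
    pdx_add (hV.pdx.mul hu.pdx) (hV.pdy.mul hu.pdy), pdx_mul hV.pdx hu.pdx, pdx_mul hV.pdy hu.pdy]

lemma pdy_opL {V u : ℝ × ℝ → ℝ} (hV : Sm V) (hu : Sm u) (p : ℝ × ℝ) :
    pdy (opL V u) p = pdy u p - (pdy (pdx (pdx u)) p + pdy (pdy (pdy u)) p) +
      (pdy (pdx V) p * pdx u p + pdx V p * pdy (pdx u) p +
        (pdy (pdy V) p * pdy u p + pdy V p * pdy (pdy u) p)) := by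
  show pdy (fun q => (u q - (pdx (pdx u) q + pdy (pdy u) q)) +
    (pdx V q * pdx u q + pdy V q * pdy u q)) p = _
  rw [pdy_add (hu.sub (hu.pdx.pdx.add hu.pdy.pdy)) ((hV.pdx.mul hu.pdx).add (hV.pdy.mul hu.pdy)),
    pdy_sub hu (hu.pdx.pdx.add hu.pdy.pdy), pdy_add hu.pdx.pdx hu.pdy.pdy,
    pdy_add (hV.pdx.mul hu.pdx) (hV.pdy.mul hu.pdy), pdy_mul hV.pdx hu.pdx, pdy_mul hV.pdy hu.pdy]

lemma bochner {V u : ℝ × ℝ → ℝ} (hV : Sm V) (hu : Sm u) (hc : HasCompactSupport u)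
    (hconv : ∀ p : ℝ × ℝ, ∀ a b : ℝ, 0 ≤ pdx (pdx V) p * a ^ 2 +
      (pdx (pdy V) p + pdy (pdx V) p) * (a * b) + pdy (pdy V) p * b ^ 2) :
    ∫ p, (hess2 u p + gradSq u p + u p ^ 2) * Real.exp (-V p) ≤
      ∫ p, (opL V u p) ^ 2 * Real.exp (-V p) := by
  have hW := hV.weight
  have hL := Sm.opL hV hu
  set X : ℝ × ℝ → ℝ := fun p => ((opL V u p + u p) * pdx u p +
    (pdx (pdx u) p * pdx u p + pdx (pdy u) p * pdy u p)) * Real.exp (-V p) with hXdef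
  set Y : ℝ × ℝ → ℝ := fun p => ((opL V u p + u p) * pdy u p +
    (pdy (pdx u) p * pdx u p + pdy (pdy u) p * pdy u p)) * Real.exp (-V p) with hYdef
  have sX1 : Sm (fun p => (opL V u p + u p) * pdx u p +
    (pdx (pdx u) p * pdx u p + pdx (pdy u) p * pdy u p)) :=
    ((hL.add hu).mul hu.pdx).add ((hu.pdx.pdx.mul hu.pdx).add (hu.pdy.pdx.mul hu.pdy))
  have sY1 : Sm (fun p => (opL V u p + u p) * pdy u p +
    (pdy (pdx u) p * pdx u p + pdy (pdy u) p * pdy u p)) :=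
    ((hL.add hu).mul hu.pdy).add ((hu.pdx.pdy.mul hu.pdx).add (hu.pdy.pdy.mul hu.pdy))
  have hX : Sm X := sX1.mul hW
  have hY : Sm Y := sY1.mul hW
  have hcX : HasCompactSupport X := HasCompactSupport.intro hc fun p hp => by
    obtain ⟨a, b, c, d, e, f, g⟩ := all_zero hp
    simp [hXdef, b, c]
  have hcY : HasCompactSupport Y := HasCompactSupport.intro hc fun p hp => by
    obtain ⟨a, b, c, d, e, f, g⟩ := all_zero hp
    simp [hYdef, b, c]
  have h0 := integral_div hX hY hcX hcY
  have i1 : Integrable (fun p => (hess2 u p + gradSq u p + u p ^ 2) * Real.exp (-V p)) :=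
    integrable_of_smc (((hu.hess2.add hu.gradSq).add (hu.pow 2)).mul hW)
      (HasCompactSupport.intro hc fun p hp => by
        obtain ⟨a, b, c, d, e, f, g⟩ := all_zero hp
        simp [hess2, gradSq, a, b, c, d, e, f, g])
  have i2 : Integrable (fun p => (opL V u p) ^ 2 * Real.exp (-V p)) :=
    integrable_of_smc ((hL.pow 2).mul hW)
      (HasCompactSupport.intro hc fun p hp => by
        obtain ⟨a, b, c, d, e, f, g⟩ := all_zero hp
        simp [opL, a, b, c, d, g])
  have i3 : Integrable (fun p => pdx X p + pdy Y p) :=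
    (integrable_of_smc hX.pdx hcX.pdx).add (integrable_of_smc hY.pdy hcY.pdy)
  have key : ∀ p, (hess2 u p + gradSq u p + u p ^ 2) * Real.exp (-V p) ≤
      (opL V u p) ^ 2 * Real.exp (-V p) + (pdx X p + pdy Y p) := by
    intro p
    have e1 : pdx X p = _ := pdx_mul sX1 hW p
    have e2 : pdy Y p = _ := pdy_mul sY1 hW p
    rw [pdx_add ((hL.add hu).mul hu.pdx) ((hu.pdx.pdx.mul hu.pdx).add (hu.pdy.pdx.mul hu.pdy)),
      pdx_mul (hL.add hu) hu.pdx, pdx_add hL hu,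
      pdx_add (hu.pdx.pdx.mul hu.pdx) (hu.pdy.pdx.mul hu.pdy), pdx_mul hu.pdx.pdx hu.pdx,
      pdx_mul hu.pdy.pdx hu.pdy, pdx_exp hV.neg, pdx_neg, pdx_opL hV hu] at e1
    rw [pdy_add ((hL.add hu).mul hu.pdy) ((hu.pdx.pdy.mul hu.pdx).add (hu.pdy.pdy.mul hu.pdy)),
      pdy_mul (hL.add hu) hu.pdy, pdy_add hL hu,
      pdy_add (hu.pdx.pdy.mul hu.pdx) (hu.pdy.pdy.mul hu.pdy), pdy_mul hu.pdx.pdy hu.pdx,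
      pdy_mul hu.pdy.pdy hu.pdy, pdy_exp hV.neg, pdy_neg, pdy_opL hV hu] at e2
    have c0 : pdx (pdy u) = pdy (pdx u) := funext hu.comm
    have c1 : pdx (pdy (pdx u)) p = pdy (pdx (pdx u)) p := hu.pdx.comm p
    have c2 : pdx (pdy (pdy u)) p = pdy (pdy (pdx u)) p := by rw [hu.pdy.comm, c0]
    rw [c0] at e1
    rw [c1, c2] at e1
    have hE : 0 ≤ Real.exp (-V p) := (Real.exp_pos _).le
    have hq := mul_nonneg (hconv p (pdx u p) (pdy u p)) hE
    have hg : 0 ≤ gradSq u p * Real.exp (-V p) := by unfold gradSq; positivity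
    have : (opL V u p) ^ 2 * Real.exp (-V p) + (pdx X p + pdy Y p) =
        (hess2 u p + gradSq u p + u p ^ 2) * Real.exp (-V p) + gradSq u p * Real.exp (-V p) +
        (pdx (pdx V) p * pdx u p ^ 2 + (pdx (pdy V) p + pdy (pdx V) p) * (pdx u p * pdy u p) +
          pdy (pdy V) p * pdy u p ^ 2) * Real.exp (-V p) := by
      rw [e1, e2]
      unfold hess2 gradSq opL
      rw [c0]
      ring
    rw [this]
    linarith
  calc ∫ p, (hess2 u p + gradSq u p + u p ^ 2) * Real.exp (-V p)
      ≤ ∫ p, ((opL V u p) ^ 2 * Real.exp (-V p) + (pdx X p + pdy Y p)) :=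
        integral_mono i1 (i2.add i3) key
    _ = ∫ p, (opL V u p) ^ 2 * Real.exp (-V p) := by
        rw [integral_add i2 i3, h0, add_zero]

/-- The Schrödinger potential obtained by conjugation. -/
def potQ (V : ℝ × ℝ → ℝ) (p : ℝ × ℝ) : ℝ :=
  (pdx V p ^ 2 + pdy V p ^ 2) / 4 - (pdx (pdx V) p + pdy (pdy V) p) / 2 + 1

protected lemma Sm.potQ {V : ℝ × ℝ → ℝ} (hV : Sm V) : Sm (potQ V) :=
  ((((hV.pdx.pow 2).add (hV.pdy.pow 2)).div_const 4).sub
    ((hV.pdx.pdx.add hV.pdy.pdy).div_const 2)).add contDiff_const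

/-- Positivity of the quadratic form of `-Δ + Q`. -/
lemma form_pos {V w : ℝ × ℝ → ℝ} (hV : Sm V) (hw : Sm w) (hc : HasCompactSupport w) :
    ∫ p, w p ^ 2 ≤ ∫ p, (gradSq w p + potQ V p * w p ^ 2) := by
  set X : ℝ × ℝ → ℝ := fun p => (w p * w p) * pdx V p
  set Y : ℝ × ℝ → ℝ := fun p => (w p * w p) * pdy V p
  have hX : Sm X := (hw.mul hw).mul hV.pdx
  have hY : Sm Y := (hw.mul hw).mul hV.pdy
  have hcX : HasCompactSupport X := HasCompactSupport.intro hc fun p hp => by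
    simp [X, (all_zero hp).1]
  have hcY : HasCompactSupport Y := HasCompactSupport.intro hc fun p hp => by
    simp [Y, (all_zero hp).1]
  have h0 := integral_div hX hY hcX hcY
  have i3 : Integrable (fun p => pdx X p + pdy Y p) :=
    (integrable_of_smc hX.pdx hcX.pdx).add (integrable_of_smc hY.pdy hcY.pdy)
  have i1 : Integrable (fun p => w p ^ 2) := integrable_of_smc (hw.pow 2)
    (HasCompactSupport.intro hc fun p hp => by simp [(all_zero hp).1])
  have i2 : Integrable (fun p => gradSq w p + potQ V p * w p ^ 2) :=
    integrable_of_smc (hw.gradSq.add (hV.potQ.mul (hw.pow 2)))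
    (HasCompactSupport.intro hc fun p hp => by
      obtain ⟨a, b, c, -⟩ := all_zero hp
      simp [gradSq, a, b, c])
  have key : ∀ p, w p ^ 2 ≤ (gradSq w p + potQ V p * w p ^ 2) + (1 / 2) * (pdx X p + pdy Y p) := by
    intro p
    have e1 : pdx X p = _ := pdx_mul (hw.mul hw) hV.pdx p
    have e2 : pdy Y p = _ := pdy_mul (hw.mul hw) hV.pdy p
    rw [pdx_mul hw hw] at e1
    rw [pdy_mul hw hw] at e2
    rw [e1, e2]
    unfold gradSq potQ
    nlinarith [sq_nonneg (pdx w p + w p * pdx V p / 2), sq_nonneg (pdy w p + w p * pdy V p / 2)]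
  calc ∫ p, w p ^ 2 ≤ ∫ p, ((gradSq w p + potQ V p * w p ^ 2) + (1 / 2) * (pdx X p + pdy Y p)) :=
        integral_mono i1 (i2.add (i3.const_mul _)) key
    _ = _ := by rw [integral_add i2 (i3.const_mul _), integral_const_mul, h0]; ring

/-- Localisation identity. -/
lemma localise {V q χ : ℝ × ℝ → ℝ} (hV : Sm V) (hq : Sm q) (hχ : Sm χ)
    (hc : HasCompactSupport χ) :
    ∫ p, (χ p * q p) ^ 2 ≤
      ∫ p, (gradSq χ p * q p ^ 2 + χ p ^ 2 * (q p * (potQ V p * q p - lap q p))) := by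
  have hw : Sm (fun p => χ p * q p) := hχ.mul hq
  have hcw : HasCompactSupport (fun p => χ p * q p) := hc.mul_right
  refine (form_pos hV hw hcw).trans_eq ?_
  set X : ℝ × ℝ → ℝ := fun p => (χ p * χ p) * (q p * pdx q p)
  set Y : ℝ × ℝ → ℝ := fun p => (χ p * χ p) * (q p * pdy q p)
  have hX : Sm X := (hχ.mul hχ).mul (hq.mul hq.pdx)
  have hY : Sm Y := (hχ.mul hχ).mul (hq.mul hq.pdy)
  have hcX : HasCompactSupport X := HasCompactSupport.intro hc fun p hp => by
    simp [X, (all_zero hp).1]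
  have hcY : HasCompactSupport Y := HasCompactSupport.intro hc fun p hp => by
    simp [Y, (all_zero hp).1]
  have h0 := integral_div hX hY hcX hcY
  have i1 : Integrable (fun p => gradSq (fun p => χ p * q p) p + potQ V p * (χ p * q p) ^ 2) :=
    integrable_of_smc (hw.gradSq.add (hV.potQ.mul (hw.pow 2)))
    (HasCompactSupport.intro hcw fun p hp => by
      obtain ⟨a, b, c, -⟩ := all_zero hp
      have a2 : χ p * q p = 0 := a
      simp only [gradSq, a2, b, c]; simp)
  have i2 : Integrable (fun p => gradSq χ p * q p ^ 2 +
      χ p ^ 2 * (q p * (potQ V p * q p - lap q p))) :=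
    integrable_of_smc ((hχ.gradSq.mul (hq.pow 2)).add ((hχ.pow 2).mul
      (hq.mul ((hV.potQ.mul hq).sub hq.lap))))
    (HasCompactSupport.intro hc fun p hp => by
      obtain ⟨a, b, c, -⟩ := all_zero hp
      simp [gradSq, a, b, c])
  rw [← sub_eq_zero, ← h0, ← integral_sub i1 i2]
  congr 1
  ext p
  have e1 : pdx X p = _ := pdx_mul (hχ.mul hχ) (hq.mul hq.pdx) p
  have e2 : pdy Y p = _ := pdy_mul (hχ.mul hχ) (hq.mul hq.pdy) p
  rw [pdx_mul hχ hχ, pdx_mul hq hq.pdx] at e1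
  rw [pdy_mul hχ hχ, pdy_mul hq hq.pdy] at e2
  rw [e1, e2]
  unfold gradSq lap
  rw [pdx_mul hχ hq, pdy_mul hχ hq]
  ring

/-- Conjugation identity: `e^{-V/2} (1+L)(e^{V/2} η) = -Δη + Qη`. -/
lemma conj_id {V η : ℝ × ℝ → ℝ} (hV : Sm V) (hη : Sm η) (p : ℝ × ℝ) :
    Real.exp (-V p / 2) * opL V (fun q => η q * Real.exp (V q / 2)) p =
      potQ V p * η p - lap η p := by
  have hV2 : Sm (fun q => V q / 2) := hV.div_const 2
  have hE : Sm (fun q => Real.exp (V q / 2)) := hV2.exp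
  have x2 : ∀ p, pdx (fun q => V q / 2) p = pdx V p / 2 := fun p => by
    have := pdx_const_mul hV (1 / 2) p
    rw [show (fun q => V q / 2) = fun q => 1 / 2 * V q from by ext q; ring, this]; ring
  have y2 : ∀ p, pdy (fun q => V q / 2) p = pdy V p / 2 := fun p => by
    have := pdy_const_mul hV (1 / 2) p
    rw [show (fun q => V q / 2) = fun q => 1 / 2 * V q from by ext q; ring, this]; ring
  have fx : pdx (fun q => η q * Real.exp (V q / 2)) =
      fun q => (pdx η q + η q * (1 / 2 * pdx V q)) * Real.exp (V q / 2) := by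
    ext q
    rw [pdx_mul hη hE, pdx_exp hV2, x2]; ring
  have fy : pdy (fun q => η q * Real.exp (V q / 2)) =
      fun q => (pdy η q + η q * (1 / 2 * pdy V q)) * Real.exp (V q / 2) := by
    ext q
    rw [pdy_mul hη hE, pdy_exp hV2, y2]; ring
  have sx : Sm (fun q => 1 / 2 * pdx V q) := contDiff_const.mul hV.pdx
  have sy : Sm (fun q => 1 / 2 * pdy V q) := contDiff_const.mul hV.pdy
  unfold opL
  rw [fx, fy, pdx_mul (hη.pdx.add (hη.mul sx)) hE, pdy_mul (hη.pdy.add (hη.mul sy)) hE,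
    pdx_add hη.pdx (hη.mul sx), pdy_add hη.pdy (hη.mul sy), pdx_mul hη sx, pdy_mul hη sy,
    pdx_const_mul hV.pdx, pdy_const_mul hV.pdy, pdx_exp hV2, pdy_exp hV2, x2, y2]
  have hm : Real.exp (-V p / 2) * Real.exp (V p / 2) = 1 := by
    rw [← Real.exp_add, show -V p / 2 + V p / 2 = 0 by ring, Real.exp_zero]
  unfold potQ lap
  linear_combination ((pdx V p ^ 2 + pdy V p ^ 2) / 4 * η p - (pdx (pdx V) p + pdy (pdy V) p) / 2 * η p + η p - (pdx (pdx η) p + pdy (pdy η) p)) * hm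



/-! ### Mollification and density of the range of `-Δ + Q` -/

/-- Mollification of `q` with kernel `k`. -/
def mol (q k : ℝ × ℝ → ℝ) (x : ℝ × ℝ) : ℝ := ∫ t, q t * k (x - t)

lemma mol_eq (q k : ℝ × ℝ → ℝ) :
    mol q k = MeasureTheory.convolution q k (ContinuousLinearMap.mul ℝ ℝ) volume := rfl

lemma mol_integrable {q k : ℝ × ℝ → ℝ} (hq : LocallyIntegrable q) (hk : Continuous k)
    (hc : HasCompactSupport k) (x : ℝ × ℝ) : Integrable (fun t => q t * k (x - t)) :=
  hc.convolutionExists_right (ContinuousLinearMap.mul ℝ ℝ) hq hk x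

lemma mol_sm {q k : ℝ × ℝ → ℝ} (hq : LocallyIntegrable q) (hk : Sm k)
    (hc : HasCompactSupport k) : Sm (mol q k) := by
  rw [mol_eq]
  exact hc.contDiff_convolution_right _ hq hk

lemma pdx_mol {q k : ℝ × ℝ → ℝ} (hq : LocallyIntegrable q) (hk : Sm k)
    (hc : HasCompactSupport k) : pdx (mol q k) = mol q (pdx k) := by
  ext x
  have h := hc.hasFDerivAt_convolution_right (ContinuousLinearMap.mul ℝ ℝ) hq
    (hk.of_le (by simp)) x
  have h2 := convolution_precompR_apply (ContinuousLinearMap.mul ℝ ℝ) hq (hc.fderiv (𝕜 := ℝ))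
    (hk.continuous_fderiv (by simp)) x ((1, 0) : ℝ × ℝ)
  rw [mol_eq, mol_eq]
  unfold pdx
  rw [h.fderiv, h2]

lemma pdy_mol {q k : ℝ × ℝ → ℝ} (hq : LocallyIntegrable q) (hk : Sm k)
    (hc : HasCompactSupport k) : pdy (mol q k) = mol q (pdy k) := by
  ext x
  have h := hc.hasFDerivAt_convolution_right (ContinuousLinearMap.mul ℝ ℝ) hq
    (hk.of_le (by simp)) x
  have h2 := convolution_precompR_apply (ContinuousLinearMap.mul ℝ ℝ) hq (hc.fderiv (𝕜 := ℝ))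
    (hk.continuous_fderiv (by simp)) x ((0, 1) : ℝ × ℝ)
  rw [mol_eq, mol_eq]
  unfold pdy
  rw [h.fderiv, h2]

lemma mol_abs_sq {q k : ℝ × ℝ → ℝ} (hq : MemLp q 2) (hk : Sm k)
    (hc : HasCompactSupport k) (h0 : ∀ x, 0 ≤ k x) (h1 : ∫ x, k x = 1) :
    Integrable (fun x => mol (fun t => |q t|) k x ^ 2) ∧
      ∫ x, mol (fun t => |q t|) k x ^ 2 ≤ ∫ x, q x ^ 2 := by
  have hlq : LocallyIntegrable q := hq.locallyIntegrable (by norm_num)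
  have hla : LocallyIntegrable (fun t => |q t|) := hq.norm.locallyIntegrable (by norm_num)
  have hq2 : Integrable (fun t => q t ^ 2) := hq.integrable_sq
  have hki : Integrable k := integrable_of_smc hk hc
  have hpt : ∀ x, mol (fun t => |q t|) k x ^ 2 ≤ mol (fun t => q t ^ 2) k x := by
    intro x
    set m := mol (fun t => |q t|) k x with hm
    have i1 := mol_integrable hq2.locallyIntegrable hk.continuous hc x
    have i2 := mol_integrable hla hk.continuous hc x
    have i3 : Integrable (fun t => k (x - t)) := hki.comp_sub_left x
    have e3 : ∫ t, k (x - t) = 1 := by rw [integral_sub_left_eq_self k volume x, h1]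
    have : 0 ≤ ∫ t, (|q t| - m) ^ 2 * k (x - t) :=
      integral_nonneg fun t => mul_nonneg (sq_nonneg _) (h0 _)
    have e : (fun t => (|q t| - m) ^ 2 * k (x - t)) = fun t =>
        (q t ^ 2 * k (x - t) - 2 * m * (|q t| * k (x - t))) + m ^ 2 * k (x - t) := by
      ext t
      rw [← sq_abs (q t)]; ring
    have i12 : Integrable (fun t => q t ^ 2 * k (x - t) - 2 * m * (|q t| * k (x - t))) :=
      i1.sub (i2.const_mul _)
    rw [e, integral_add i12 (i3.const_mul _),
      integral_sub i1 (i2.const_mul _), integral_const_mul, integral_const_mul, e3] at this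
    have hm' : ∫ t, |q t| * k (x - t) = m := rfl
    rw [hm'] at this
    have hm2 : ∫ t, q t ^ 2 * k (x - t) = mol (fun t => q t ^ 2) k x := rfl
    rw [hm2] at this
    nlinarith
  have hint0 : Integrable (mol (fun t => q t ^ 2) k) := by
    rw [mol_eq]
    exact hq2.integrable_convolution _ hki
  have hval : ∫ x, mol (fun t => q t ^ 2) k x = ∫ x, q x ^ 2 := by
    rw [mol_eq, integral_convolution _ hq2 hki, h1]; simp
  have hmi : Integrable (fun x => mol (fun t => |q t|) k x ^ 2) := by
    refine hint0.mono' ((mol_sm hla hk hc).continuous.pow 2).aestronglyMeasurable ?_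
    refine Filter.Eventually.of_forall fun x => ?_
    rw [Real.norm_of_nonneg (sq_nonneg _)]
    exact hpt x
  exact ⟨hmi, hval ▸ integral_mono hmi hint0 hpt⟩

lemma pdx_reflect {k : ℝ × ℝ → ℝ} (hk : Sm k) (x : ℝ × ℝ) :
    pdx (fun y => k (x - y)) = fun y => - pdx k (x - y) := by
  ext y
  unfold pdx
  have h := ((hk.diff (x - y)).hasFDerivAt.comp y ((hasFDerivAt_id y).const_sub x)).fderiv
  simp only [Function.comp_def, id] at h
  rw [h]; simp

lemma pdy_reflect {k : ℝ × ℝ → ℝ} (hk : Sm k) (x : ℝ × ℝ) :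
    pdy (fun y => k (x - y)) = fun y => - pdy k (x - y) := by
  ext y
  unfold pdy
  have h := ((hk.diff (x - y)).hasFDerivAt.comp y ((hasFDerivAt_id y).const_sub x)).fderiv
  simp only [Function.comp_def, id] at h
  rw [h]; simp

lemma lap_reflect {k : ℝ × ℝ → ℝ} (hk : Sm k) (x y : ℝ × ℝ) :
    lap (fun y => k (x - y)) y = lap k (x - y) := by
  unfold lap
  rw [pdx_reflect hk, pdy_reflect hk, pdx_neg, pdy_neg, pdx_reflect hk.pdx, pdy_reflect hk.pdy]
  ring

lemma lap_mol {q k : ℝ × ℝ → ℝ} (hq : LocallyIntegrable q) (hk : Sm k)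
    (hc : HasCompactSupport k) (x : ℝ × ℝ) : lap (mol q k) x = mol q (lap k) x := by
  unfold lap
  rw [pdx_mol hq hk hc, pdy_mol hq hk hc, pdx_mol hq hk.pdx hc.pdx, pdy_mol hq hk.pdy hc.pdy]
  unfold mol
  rw [← integral_add (mol_integrable hq hk.pdx.pdx.continuous hc.pdx.pdx x)
    (mol_integrable hq hk.pdy.pdy.continuous hc.pdy.pdy x)]
  congr 1; ext t; ring

/-- One-step estimate for a weak null solution. -/
lemma null_step {V q k χ : ℝ × ℝ → ℝ} (hV : Sm V) (hq : MemLp q 2) (hk : Sm k)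
    (hc : HasCompactSupport k) (h0 : ∀ x, 0 ≤ k x) (h1 : ∫ x, k x = 1)
    (hnull : ∀ η, Sm η → HasCompactSupport η → ∫ t, q t * (potQ V t * η t - lap η t) = 0)
    (hχ : Sm χ) (hcχ : HasCompactSupport χ) (hχ1 : ∀ x, |χ x| ≤ 1) {c ω : ℝ} (hc0 : 0 ≤ c) (hω0 : 0 ≤ ω)
    (hgr : ∀ x, gradSq χ x ≤ c)
    (hω : ∀ x ∈ tsupport χ, ∀ t, k (x - t) ≠ 0 → |potQ V x - potQ V t| ≤ ω) :
    ∫ x, (χ x * mol q k x) ^ 2 ≤ (c + ω) * ∫ x, q x ^ 2 := by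
  have hlq : LocallyIntegrable q := hq.locallyIntegrable (by norm_num)
  have hla : LocallyIntegrable (fun t => |q t|) := hq.norm.locallyIntegrable (by norm_num)
  have hms := mol_sm hlq hk hc
  have hlQ : LocallyIntegrable (fun t => q t * potQ V t) := by
    have := (locallyIntegrableOn_univ.2 hlq).mul_continuousOn
      hV.potQ.continuous.continuousOn isOpen_univ.isLocallyClosed
    exact locallyIntegrableOn_univ.1 this
  obtain ⟨mi, mle⟩ := mol_abs_sq hq hk hc h0 h1
  have hmabs : ∀ x, |mol q k x| ≤ mol (fun t => |q t|) k x := by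
    intro x
    refine (abs_integral_le_integral_abs).trans_eq ?_
    unfold mol
    congr 1; ext t
    rw [abs_mul, abs_of_nonneg (h0 _)]
  have hm0 : ∀ x, 0 ≤ mol (fun t => |q t|) k x := fun x => (abs_nonneg _).trans (hmabs x)
  have hcomm : ∀ x ∈ tsupport χ, |potQ V x * mol q k x - lap (mol q k) x| ≤
      ω * mol (fun t => |q t|) k x := by
    intro x hx
    have hη : Sm (fun y => k (x - y)) := hk.comp (contDiff_const.sub contDiff_id)
    have hcη : HasCompactSupport (fun y => k (x - y)) :=
      hc.comp_homeomorph (Homeomorph.subLeft x)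
    have hz := hnull _ hη hcη
    have i1 := mol_integrable hlq hk.continuous hc x
    have i2 := mol_integrable hlQ hk.continuous hc x
    have hlapc : HasCompactSupport (lap k) := HasCompactSupport.intro hc fun p hp => by
      obtain ⟨a, b, c, d, e, f, g⟩ := all_zero hp
      simp [lap, d, g]
    have i3 := mol_integrable hlq hk.lap.continuous hlapc x
    have e1 : ∫ t, q t * (potQ V t * k (x - t) - lap (fun y => k (x - y)) t) =
        (∫ t, q t * potQ V t * k (x - t)) - mol q (lap k) x := by
      unfold mol
      rw [← integral_sub i2 i3]
      congr 1; ext t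
      rw [lap_reflect hk]; ring
    rw [e1] at hz
    rw [lap_mol hlq hk hc]
    have e2 : potQ V x * mol q k x - mol q (lap k) x =
        ∫ t, (potQ V x * (q t * k (x - t)) - q t * potQ V t * k (x - t)) := by
      rw [integral_sub (i1.const_mul _) i2, integral_const_mul]
      unfold mol at hz ⊢
      linarith
    rw [e2]
    unfold mol
    rw [← integral_const_mul]
    refine (abs_integral_le_integral_abs).trans (integral_mono_of_nonneg
      (Filter.Eventually.of_forall fun t => abs_nonneg _)
      ((mol_integrable hla hk.continuous hc x).const_mul ω)
      (Filter.Eventually.of_forall fun t => ?_))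
    show |potQ V x * (q t * k (x - t)) - q t * potQ V t * k (x - t)| ≤ ω * (|q t| * k (x - t))
    by_cases hkt : k (x - t) = 0
    · simp [hkt]
    · have := hω x hx t hkt
      rw [show potQ V x * (q t * k (x - t)) - q t * potQ V t * k (x - t) =
        (potQ V x - potQ V t) * (q t * k (x - t)) by ring, abs_mul, abs_mul, abs_of_nonneg (h0 _)]
      exact mul_le_mul_of_nonneg_right this (mul_nonneg (abs_nonneg _) (h0 _))
  refine (localise hV hms hχ hcχ).trans ?_
  have hfin : ∫ p, (gradSq χ p * mol q k p ^ 2 +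
      χ p ^ 2 * (mol q k p * (potQ V p * mol q k p - lap (mol q k) p))) ≤
      ∫ p, (c + ω) * mol (fun t => |q t|) k p ^ 2 := by
    refine integral_mono (integrable_of_smc ((hχ.gradSq.mul (hms.pow 2)).add ((hχ.pow 2).mul
      (hms.mul ((hV.potQ.mul hms).sub hms.lap)))) (HasCompactSupport.intro hcχ fun p hp => by
      obtain ⟨a, b, c, -⟩ := all_zero hp
      simp [gradSq, a, b, c])) (mi.const_mul _) fun p => ?_
    show gradSq χ p * mol q k p ^ 2 +
      χ p ^ 2 * (mol q k p * (potQ V p * mol q k p - lap (mol q k) p)) ≤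
        (c + ω) * mol (fun t => |q t|) k p ^ 2
    have hA : mol q k p ^ 2 ≤ mol (fun t => |q t|) k p ^ 2 := by
      rw [← sq_abs]; exact pow_le_pow_left₀ (abs_nonneg _) (hmabs p) 2
    by_cases hp : p ∈ tsupport χ
    · have h1 : gradSq χ p * mol q k p ^ 2 ≤ c * mol (fun t => |q t|) k p ^ 2 :=
        mul_le_mul (hgr p) hA (sq_nonneg _) hc0
      have h2 : χ p ^ 2 ≤ 1 := by rw [← sq_abs]; exact pow_le_one₀ (abs_nonneg _) (hχ1 p)
      have h3 : mol q k p * (potQ V p * mol q k p - lap (mol q k) p) ≤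
          mol (fun t => |q t|) k p * (ω * mol (fun t => |q t|) k p) := by
        refine (le_abs_self _).trans ?_
        rw [abs_mul]
        exact mul_le_mul (hmabs p) (hcomm p hp) (abs_nonneg _) (hm0 p)
      have h4 : χ p ^ 2 * (mol q k p * (potQ V p * mol q k p - lap (mol q k) p)) ≤
          ω * mol (fun t => |q t|) k p ^ 2 := by
        have : 0 ≤ ω * mol (fun t => |q t|) k p ^ 2 := by positivity
        nlinarith [sq_nonneg (χ p)]
      linarith
    · obtain ⟨a, b, c', -⟩ := all_zero hp
      simp only [gradSq, a, b, c']
      have : 0 ≤ (c + ω) * mol (fun t => |q t|) k p ^ 2 := by positivity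
      simpa using this
  refine hfin.trans ?_
  rw [integral_const_mul]
  exact mul_le_mul_of_nonneg_left mle (by positivity)



/-- A version of Fatou's lemma. -/
lemma fatou_le {α : Type*} [MeasurableSpace α] {μ : Measure α} {F : ℕ → α → ℝ} {g : α → ℝ}
    (hF : ∀ n, Integrable (F n) μ) (hF0 : ∀ n x, 0 ≤ F n x) (hg : Integrable g μ)
    (hg0 : ∀ x, 0 ≤ g x)
    (hlim : ∀ᵐ x ∂μ, Filter.Tendsto (fun n => F n x) Filter.atTop (nhds (g x))) {B : ℝ}
    (hB : ∀ᶠ n in Filter.atTop, ∫ x, F n x ∂μ ≤ B) : ∫ x, g x ∂μ ≤ B := by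
  have hmin : ∀ n, Integrable (fun x => min (F n x) (g x)) μ := fun n => (hF n).inf hg
  have ht : Filter.Tendsto (fun n => ∫ x, min (F n x) (g x) ∂μ) Filter.atTop
      (nhds (∫ x, g x ∂μ)) := by
    refine tendsto_integral_of_dominated_convergence g (fun n => (hmin n).1) hg ?_ ?_
    · intro n
      refine Filter.Eventually.of_forall fun x => ?_
      rw [Real.norm_of_nonneg (le_min (hF0 n x) (hg0 x))]
      exact min_le_right _ _
    · filter_upwards [hlim] with x hx
      have := hx.min (tendsto_const_nhds (x := g x))
      simpa using this
  refine le_of_tendsto ht ?_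
  filter_upwards [hB] with n hn
  exact (integral_mono (hmin n) (hF n) fun x => min_le_left _ _).trans hn

lemma pdx_affine {f : ℝ × ℝ → ℝ} {a p : ℝ × ℝ} {c : ℝ} (hf : DifferentiableAt ℝ f (a + c • p)) :
    pdx (fun x => f (a + c • x)) p = c * pdx f (a + c • p) := by
  unfold pdx
  have h := (hf.hasFDerivAt.comp p (((hasFDerivAt_id p).const_smul c).const_add a)).fderiv
  simp only [Function.comp_def] at h
  rw [show (fun x => f (a + c • x)) = fun x => f (a + (c • id) x) from rfl, h]
  have : (c • ContinuousLinearMap.id ℝ (ℝ × ℝ)) (1, 0) = c • ((1, 0) : ℝ × ℝ) := rfl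
  rw [ContinuousLinearMap.comp_apply, this, map_smul, smul_eq_mul]

lemma pdy_affine {f : ℝ × ℝ → ℝ} {a p : ℝ × ℝ} {c : ℝ} (hf : DifferentiableAt ℝ f (a + c • p)) :
    pdy (fun x => f (a + c • x)) p = c * pdy f (a + c • p) := by
  unfold pdy
  have h := (hf.hasFDerivAt.comp p (((hasFDerivAt_id p).const_smul c).const_add a)).fderiv
  simp only [Function.comp_def] at h
  rw [show (fun x => f (a + c • x)) = fun x => f (a + (c • id) x) from rfl, h]
  have : (c • ContinuousLinearMap.id ℝ (ℝ × ℝ)) (0, 1) = c • ((0, 1) : ℝ × ℝ) := rfl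
  rw [ContinuousLinearMap.comp_apply, this, map_smul, smul_eq_mul]

/-- Cutoff functions with small gradient. -/
lemma exists_cutoffs : ∃ (C : ℝ) (χ : ℕ → ℝ × ℝ → ℝ), 0 ≤ C ∧ (∀ n, Sm (χ n)) ∧
    (∀ n, HasCompactSupport (χ n)) ∧ (∀ n x, |χ n x| ≤ 1) ∧
    (∀ n x, gradSq (χ n) x ≤ C / ((n : ℝ) + 1) ^ 2) ∧
    ∀ x, Filter.Tendsto (fun n => χ n x) Filter.atTop (nhds 1) := by
  let b : ContDiffBump (0 : ℝ × ℝ) := ⟨1, 2, one_pos, one_lt_two⟩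
  have hb : Sm b := b.contDiff
  have hbc : HasCompactSupport b := b.hasCompactSupport
  have hgc : HasCompactSupport (gradSq b) := HasCompactSupport.intro hbc fun p hp => by
    obtain ⟨a, b, c, -⟩ := all_zero hp
    simp [gradSq, b, c]
  obtain ⟨C, hC⟩ := hgc.exists_bound_of_continuous hb.gradSq.continuous
  have hC' : ∀ x, gradSq b x ≤ C := fun x => (le_abs_self _).trans (hC x)
  have hC0 : 0 ≤ C := (norm_nonneg _).trans (hC 0)
  refine ⟨C, fun n x => b (0 + ((n : ℝ) + 1)⁻¹ • x), hC0, ?_, ?_, ?_, ?_, ?_⟩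
  · intro n
    have : Sm (fun x => b (0 + ((n : ℝ) + 1)⁻¹ • x)) :=
      hb.comp (contDiff_const.add (contDiff_id.const_smul ((n : ℝ) + 1)⁻¹))
    exact this
  · intro n
    have h : ((n : ℝ) + 1)⁻¹ ≠ 0 := by positivity
    have := hbc.comp_homeomorph (Homeomorph.smulOfNeZero _ h)
    simpa [Function.comp_def] using this
  · intro n x
    rw [abs_of_nonneg b.nonneg]; exact b.le_one
  · intro n x
    unfold gradSq
    rw [pdx_affine (hb.diff _), pdy_affine (hb.diff _)]
    have := hC' (0 + ((n : ℝ) + 1)⁻¹ • x)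
    unfold gradSq at this
    rw [mul_pow, mul_pow, ← mul_add, div_eq_inv_mul, inv_pow]
    exact mul_le_mul_of_nonneg_left this (by positivity)
  · intro x
    have h1 : Filter.Tendsto (fun n : ℕ => 0 + ((n : ℝ) + 1)⁻¹ • x) Filter.atTop
        (nhds (0 + (0 : ℝ) • x)) := by
      refine tendsto_const_nhds.add (Filter.Tendsto.smul_const ?_ x)
      have := tendsto_one_div_add_atTop_nhds_zero_nat (𝕜 := ℝ)
      simpa using this
    have h2 := (hb.continuous.tendsto _).comp h1
    have h3 : b (0 + (0 : ℝ) • x) = 1 := b.one_of_mem_closedBall (by simp [b])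
    rw [h3] at h2
    exact h2

lemma null_cut {V q χ : ℝ × ℝ → ℝ} (hV : Sm V) (hq : MemLp q 2)
    (hnull : ∀ η, Sm η → HasCompactSupport η → ∫ t, q t * (potQ V t * η t - lap η t) = 0)
    (hχ : Sm χ) (hcχ : HasCompactSupport χ) (hχ1 : ∀ x, |χ x| ≤ 1) {c : ℝ} (hc0 : 0 ≤ c)
    (hgr : ∀ x, gradSq χ x ≤ c) :
    ∫ x, (χ x * q x) ^ 2 ≤ c * ∫ x, q x ^ 2 := by
  have hlq : LocallyIntegrable q := hq.locallyIntegrable (by norm_num)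
  let r : ℕ → ℝ := fun n => 1 / ((n : ℝ) + 1)
  have hr : ∀ n, 0 < r n := fun n => by positivity
  have hr0 : Filter.Tendsto r Filter.atTop (nhds 0) := tendsto_one_div_add_atTop_nhds_zero_nat
  let b : ℕ → ContDiffBump (0 : ℝ × ℝ) := fun n =>
    ⟨r n / 2, r n, half_pos (hr n), half_lt_self (hr n)⟩
  let k : ℕ → ℝ × ℝ → ℝ := fun n => (b n).normed volume
  have hk : ∀ n, Sm (k n) := fun n => (b n).contDiff_normed
  have hkc : ∀ n, HasCompactSupport (k n) := fun n => (b n).hasCompactSupport_normed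
  have hk0 : ∀ n x, 0 ≤ k n x := fun n x => (b n).nonneg_normed x
  have hk1 : ∀ n, ∫ x, k n x = 1 := fun n => (b n).integral_normed
  have hae : ∀ᵐ x, Filter.Tendsto (fun n => mol q (k n) x) Filter.atTop (nhds (q x)) := by
    have := ContDiffBump.ae_convolution_tendsto_right_of_locallyIntegrable (μ := volume)
      (φ := b) (l := Filter.atTop) (K := 2) hr0
      (Filter.Eventually.of_forall fun n => by simp only [b]; linarith) hlq
    filter_upwards [this] with x hx
    refine hx.congr fun n => ?_
    rw [convolution_eq_swap]
    unfold mol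
    congr 1; ext t
    simp [k, mul_comm]
  have key : ∀ ω : ℝ, 0 < ω → ∫ x, (χ x * q x) ^ 2 ≤ (c + ω) * ∫ x, q x ^ 2 := by
    intro ω hω
    have hi : Integrable (fun x => (χ x * q x) ^ 2) := by
      refine hq.integrable_sq.mono' ((hχ.continuous.aestronglyMeasurable.mul hq.1).pow 2) ?_
      refine Filter.Eventually.of_forall fun x => ?_
      rw [Real.norm_of_nonneg (sq_nonneg _), mul_pow]
      have : χ x ^ 2 ≤ 1 := by rw [← sq_abs]; exact pow_le_one₀ (abs_nonneg _) (hχ1 x)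
      nlinarith [sq_nonneg (q x)]
    refine fatou_le (F := fun n x => (χ x * mol q (k n) x) ^ 2) (fun n => ?_) (fun n x => sq_nonneg _)
      hi (fun x => sq_nonneg _) ?_ ?_
    · have hm := mol_sm hlq (hk n) (hkc n)
      refine integrable_of_smc ((hχ.mul hm).pow 2) (HasCompactSupport.intro hcχ fun p hp => ?_)
      obtain ⟨a, -⟩ := all_zero hp
      simp [a]
    · filter_upwards [hae] with x hx
      exact (hx.const_mul _).pow 2
    · have hcomp : IsCompact (Metric.cthickening 1 (tsupport χ)) := IsCompact.cthickening hcχ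
      have huc := hcomp.uniformContinuousOn_of_continuous hV.potQ.continuous.continuousOn
      rw [Metric.uniformContinuousOn_iff] at huc
      obtain ⟨δ, hδ, hd⟩ := huc ω hω
      filter_upwards [hr0.eventually (gt_mem_nhds hδ), hr0.eventually (gt_mem_nhds one_pos)] with n h1 h2
      refine null_step hV hq (hk n) (hkc n) (hk0 n) (hk1 n) hnull hχ hcχ hχ1 hc0 hω.le hgr ?_
      intro x hx t ht
      have hxt : x - t ∈ Function.support (k n) := ht
      rw [ContDiffBump.support_normed_eq, Metric.mem_ball, dist_zero_right, ← dist_eq_norm] at hxt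
      have hxt' : dist x t < r n := hxt
      have := hd x (Metric.self_subset_cthickening _ hx) t
        (Metric.mem_cthickening_of_dist_le t x 1 _ hx (by rw [dist_comm]; linarith)) (by linarith)
      rw [Real.dist_eq] at this
      exact this.le
  have hlim : Filter.Tendsto (fun ω : ℝ => (c + ω) * ∫ x, q x ^ 2) (nhdsWithin 0 (Ioi 0))
      (nhds ((c + 0) * ∫ x, q x ^ 2)) :=
    ((tendsto_const_nhds.add Filter.tendsto_id).mul_const _).mono_left nhdsWithin_le_nhds
  rw [add_zero] at hlim
  refine ge_of_tendsto hlim ?_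
  filter_upwards [self_mem_nhdsWithin] with ω hω
  exact key ω hω

lemma null_zero {V q : ℝ × ℝ → ℝ} (hV : Sm V) (hq : MemLp q 2)
    (hnull : ∀ η, Sm η → HasCompactSupport η → ∫ t, q t * (potQ V t * η t - lap η t) = 0) :
    ∫ x, q x ^ 2 = 0 := by
  obtain ⟨C, χ, hC, hχ, hcχ, hχ1, hg, hlim⟩ := exists_cutoffs
  refine le_antisymm ?_ (integral_nonneg fun x => sq_nonneg _)
  refine le_of_forall_pos_le_add fun ε hε => ?_
  rw [zero_add]
  refine fatou_le (F := fun n x => (χ n x * q x) ^ 2) (fun n => ?_) (fun n x => sq_nonneg _)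
      hq.integrable_sq (fun x => sq_nonneg _) ?_ ?_
  · refine hq.integrable_sq.mono' (((hχ n).continuous.aestronglyMeasurable.mul hq.1).pow 2) ?_
    refine Filter.Eventually.of_forall fun x => ?_
    rw [Real.norm_of_nonneg (sq_nonneg _), mul_pow]
    have : χ n x ^ 2 ≤ 1 := by rw [← sq_abs]; exact pow_le_one₀ (abs_nonneg _) (hχ1 n x)
    nlinarith [sq_nonneg (q x)]
  · refine Filter.Eventually.of_forall fun x => ?_
    have := ((hlim x).mul_const (q x)).pow 2
    simpa using this
  · have h1 : Filter.Tendsto (fun n : ℕ => C * (1 / ((n : ℝ) + 1)) ^ 2 * ∫ x, q x ^ 2) Filter.atTop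
        (nhds (C * 0 ^ 2 * ∫ x, q x ^ 2)) :=
      ((tendsto_one_div_add_atTop_nhds_zero_nat.pow 2).const_mul C).mul_const _
    have h2 : C * 0 ^ 2 * ∫ x, q x ^ 2 < ε := by simpa using hε
    filter_upwards [h1.eventually (gt_mem_nhds h2)] with n hn
    refine (null_cut hV hq hnull (hχ n) (hcχ n) (hχ1 n) (by positivity) (hg n)).trans ?_
    rw [one_div, inv_pow, ← div_eq_mul_inv] at hn
    exact hn.le

/-- Range density. -/
lemma range_dense {V f : ℝ × ℝ → ℝ} (hV : Sm V) (hf : MemLp f 2) {ε : ℝ} (hε : 0 < ε) :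
    ∃ u, Sm u ∧ HasCompactSupport u ∧
      ∫ p, (Real.exp (-V p / 2) * opL V u p - f p) ^ 2 ≤ ε := by
  let T : (ℝ × ℝ → ℝ) → ℝ × ℝ → ℝ := fun η p => potQ V p * η p - lap η p
  have hT : ∀ η, Sm η → HasCompactSupport η → MemLp (T η) 2 := fun η h1 h2 =>
    Continuous.memLp_of_hasCompactSupport ((hV.potQ.mul h1).sub h1.lap).continuous
      (HasCompactSupport.intro h2 fun p hp => by
        obtain ⟨a, b, c, d, e, f, g⟩ := all_zero hp
        simp [T, lap, a, d, g])
  have hz : ∀ (g : ℝ × ℝ → ℝ) (hg : MemLp g 2), g = 0 → hg.toLp g = 0 := by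
    rintro _ hg rfl
    exact MemLp.toLp_zero _
  let K : Submodule ℝ (Lp ℝ 2 (volume : Measure (ℝ × ℝ))) :=
    { carrier := {g | ∃ η, ∃ h1 : Sm η, ∃ h2 : HasCompactSupport η, g = (hT η h1 h2).toLp _}
      zero_mem' := by
        refine ⟨fun _ => 0, contDiff_const, HasCompactSupport.zero, ?_⟩
        symm
        have : T (fun _ => 0) = 0 := by
          ext p
          obtain ⟨a, b, c, d, e, f, g⟩ := all_zero (u := fun _ => (0 : ℝ)) (p := p) (by simp [tsupport])
          simp only [T, lap, d, g]
          simp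
        exact hz _ _ this
      add_mem' := by
        rintro _ _ ⟨η, h1, h2, rfl⟩ ⟨η', h1', h2', rfl⟩
        refine ⟨fun p => η p + η' p, h1.add h1', h2.add h2', ?_⟩
        rw [← MemLp.toLp_add]
        refine MemLp.toLp_congr _ _ (Filter.Eventually.of_forall fun p => ?_)
        have e1 : pdx (fun p => η p + η' p) = fun p => pdx η p + pdx η' p :=
          funext fun p => pdx_add h1 h1' p
        have e2 : pdy (fun p => η p + η' p) = fun p => pdy η p + pdy η' p :=
          funext fun p => pdy_add h1 h1' p
        simp only [T, Pi.add_apply, lap]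
        rw [e1, e2, pdx_add h1.pdx h1'.pdx, pdy_add h1.pdy h1'.pdy]; ring
      smul_mem' := by
        rintro c _ ⟨η, h1, h2, rfl⟩
        refine ⟨fun p => c * η p, contDiff_const.mul h1, h2.mul_left, ?_⟩
        rw [← MemLp.toLp_const_smul]
        refine MemLp.toLp_congr _ _ (Filter.Eventually.of_forall fun p => ?_)
        have e1 : pdx (fun p => c * η p) = fun p => c * pdx η p :=
          funext fun p => pdx_const_mul h1 c p
        have e2 : pdy (fun p => c * η p) = fun p => c * pdy η p :=
          funext fun p => pdy_const_mul h1 c p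
        simp only [T, Pi.smul_apply, lap, smul_eq_mul]
        rw [e1, e2, pdx_const_mul h1.pdx, pdy_const_mul h1.pdy]; ring }
  have hK : K.topologicalClosure = ⊤ := by
    rw [Submodule.topologicalClosure_eq_top_iff, Submodule.eq_bot_iff]
    intro q hq
    have hqm : MemLp q 2 := Lp.memLp q
    have h0 : ∫ x, (q : ℝ × ℝ → ℝ) x ^ 2 = 0 := by
      refine null_zero hV hqm fun η h1 h2 => ?_
      have h3 := (Submodule.mem_orthogonal _ _).1 hq ((hT η h1 h2).toLp _) ⟨η, h1, h2, rfl⟩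
      rw [L2.inner_def] at h3
      rw [← h3]
      refine integral_congr_ae ?_
      filter_upwards [(hT η h1 h2).coeFn_toLp] with x hx
      rw [hx]
      simp [T]
    have h4 : ∀ᵐ x, (q : ℝ × ℝ → ℝ) x ^ 2 = 0 := by
      have := (integral_eq_zero_iff_of_nonneg (fun x => sq_nonneg _) hqm.integrable_sq).1 h0
      exact this
    rw [Lp.eq_zero_iff_ae_eq_zero]
    filter_upwards [h4] with x hx
    exact pow_eq_zero_iff (two_ne_zero) |>.1 hx
  have hmem : hf.toLp f ∈ closure (K : Set (Lp ℝ 2 (volume : Measure (ℝ × ℝ)))) := by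
    rw [← Submodule.topologicalClosure_coe, hK]; trivial
  obtain ⟨_, ⟨η, h1, h2, rfl⟩, hd⟩ := Metric.mem_closure_iff.1 hmem (Real.sqrt ε) (Real.sqrt_pos.2 hε)
  have hV2 : Sm (fun q => Real.exp (V q / 2)) := (hV.div_const 2).exp
  refine ⟨fun q => η q * Real.exp (V q / 2), h1.mul hV2, h2.mul_right, ?_⟩
  simp only [conj_id hV h1]
  rw [dist_comm, dist_eq_norm, ← MemLp.toLp_sub] at hd
  have hn : ‖((hT η h1 h2).sub hf).toLp (T η - f)‖ ^ 2 =
      ∫ p, (potQ V p * η p - lap η p - f p) ^ 2 := by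
    rw [← real_inner_self_eq_norm_sq, L2.inner_def]
    refine integral_congr_ae ?_
    filter_upwards [((hT η h1 h2).sub hf).coeFn_toLp] with x hx
    rw [hx]
    simp [T, sq]
  rw [← hn]
  calc _ ≤ (Real.sqrt ε) ^ 2 := pow_le_pow_left₀ (norm_nonneg _) hd.le 2
    _ = ε := Real.sq_sqrt hε.le



/-! ### Convex penalisation weights -/

/-- A smooth convex function vanishing exactly on the nonpositive half line. -/
def sfun (t : ℝ) : ℝ := ∫ x in (0 : ℝ)..t, expNegInvGlue x

lemma expGlue_cont : Continuous expNegInvGlue :=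
  (expNegInvGlue.contDiff (n := 0)).continuous

lemma sfun_hasDeriv (t : ℝ) : HasDerivAt sfun (expNegInvGlue t) t :=
  intervalIntegral.integral_hasDerivAt_right (expGlue_cont.intervalIntegrable _ _)
    (expGlue_cont.stronglyMeasurableAtFilter _ _) expGlue_cont.continuousAt

lemma sfun_deriv : deriv sfun = expNegInvGlue := funext fun t => (sfun_hasDeriv t).deriv

lemma sfun_diff : Differentiable ℝ sfun := fun t => (sfun_hasDeriv t).differentiableAt

lemma sfun_sm : ContDiff ℝ ((⊤ : ℕ∞) : WithTop ℕ∞) sfun := by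
  rw [contDiff_infty_iff_deriv, sfun_deriv]
  exact ⟨sfun_diff, expNegInvGlue.contDiff⟩

lemma sfun_zero {t : ℝ} (ht : t ≤ 0) : sfun t = 0 := by
  unfold sfun
  rw [intervalIntegral.integral_symm, intervalIntegral.integral_of_le ht]
  rw [setIntegral_eq_zero_of_forall_eq_zero, neg_zero]
  intro x hx
  exact expNegInvGlue.zero_of_nonpos hx.2

lemma sfun_pos {t : ℝ} (ht : 0 < t) : 0 < sfun t :=
  intervalIntegral.intervalIntegral_pos_of_pos_on (expGlue_cont.intervalIntegrable _ _)
    (fun _ hx => expNegInvGlue.pos_of_pos hx.1) ht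

lemma sfun_nonneg (t : ℝ) : 0 ≤ sfun t := by
  rcases le_or_gt t 0 with h | h
  · rw [sfun_zero h]
  · exact (sfun_pos h).le

/-- Admissible weights for the convex set `K`. -/
structure GoodW (K : Set (ℝ × ℝ)) (V : ℝ × ℝ → ℝ) : Prop where
  sm : Sm V
  nonneg : ∀ x, 0 ≤ V x
  zero : ∀ x ∈ K, V x = 0
  conv : ∀ p : ℝ × ℝ, ∀ a b : ℝ, 0 ≤ pdx (pdx V) p * a ^ 2 +
      (pdx (pdy V) p + pdy (pdx V) p) * (a * b) + pdy (pdy V) p * b ^ 2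

lemma GoodW.add {K : Set (ℝ × ℝ)} {V W : ℝ × ℝ → ℝ} (hV : GoodW K V) (hW : GoodW K W) :
    GoodW K (fun x => V x + W x) := by
  refine ⟨hV.sm.add hW.sm, fun x => add_nonneg (hV.nonneg x) (hW.nonneg x),
    fun x hx => by rw [hV.zero x hx, hW.zero x hx, add_zero], fun p a b => ?_⟩
  have e1 : pdx (fun p => V p + W p) = fun p => pdx V p + pdx W p :=
    funext fun p => pdx_add hV.sm hW.sm p
  have e2 : pdy (fun p => V p + W p) = fun p => pdy V p + pdy W p :=
    funext fun p => pdy_add hV.sm hW.sm p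
  rw [e1, e2, pdx_add hV.sm.pdx hW.sm.pdx, pdx_add hV.sm.pdy hW.sm.pdy,
    pdy_add hV.sm.pdx hW.sm.pdx, pdy_add hV.sm.pdy hW.sm.pdy]
  have h1 := hV.conv p a b
  have h2 := hW.conv p a b
  linarith

lemma GoodW.smul {K : Set (ℝ × ℝ)} {V : ℝ × ℝ → ℝ} (hV : GoodW K V) {c : ℝ} (hc : 0 ≤ c) :
    GoodW K (fun x => c * V x) := by
  refine ⟨contDiff_const.mul hV.sm, fun x => mul_nonneg hc (hV.nonneg x),
    fun x hx => by rw [hV.zero x hx, mul_zero], fun p a b => ?_⟩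
  have e1 : pdx (fun p => c * V p) = fun p => c * pdx V p :=
    funext fun p => pdx_const_mul hV.sm c p
  have e2 : pdy (fun p => c * V p) = fun p => c * pdy V p :=
    funext fun p => pdy_const_mul hV.sm c p
  rw [e1, e2, pdx_const_mul hV.sm.pdx, pdx_const_mul hV.sm.pdy,
    pdy_const_mul hV.sm.pdx, pdy_const_mul hV.sm.pdy]
  have h1 := mul_nonneg hc (hV.conv p a b)
  linarith

lemma goodW_zero (K : Set (ℝ × ℝ)) : GoodW K (fun _ => 0) := by
  refine ⟨contDiff_const, fun _ => le_rfl, fun _ _ => rfl, fun p a b => ?_⟩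
  obtain ⟨a, b, c, d, e, f, g⟩ := all_zero (u := fun _ => (0 : ℝ)) (p := p) (by simp [tsupport])
  rw [d, e, f, g]; simp

lemma goodW_aff {K : Set (ℝ × ℝ)} (f : (ℝ × ℝ) →L[ℝ] ℝ) (u : ℝ) (h : ∀ a ∈ K, f a ≤ u) :
    GoodW K (fun x => sfun (f x - u)) := by
  have hl : Sm (fun x => f x - u) := f.contDiff.sub contDiff_const
  have hlx : ∀ p, pdx (fun x => f x - u) p = f (1, 0) := fun p => by
    unfold pdx
    rw [fderiv_sub_const, ContinuousLinearMap.fderiv]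
  have hly : ∀ p, pdy (fun x => f x - u) p = f (0, 1) := fun p => by
    unfold pdy
    rw [fderiv_sub_const, ContinuousLinearMap.fderiv]
  have hgs : ContDiff ℝ ((⊤ : ℕ∞) : WithTop ℕ∞) expNegInvGlue := expNegInvGlue.contDiff
  have hgd : Differentiable ℝ expNegInvGlue := hgs.differentiable (by simp)
  have hG : Sm (fun x => expNegInvGlue (f x - u)) := hgs.comp hl
  refine ⟨sfun_sm.comp hl, fun x => sfun_nonneg _, fun x hx => sfun_zero (by linarith [h x hx]),
    fun p a b => ?_⟩
  have e1 : pdx (fun x => sfun (f x - u)) = fun x => f (1, 0) * expNegInvGlue (f x - u) :=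
    funext fun p => by rw [pdx_comp sfun_diff hl, hlx, sfun_deriv, mul_comm]
  have e2 : pdy (fun x => sfun (f x - u)) = fun x => f (0, 1) * expNegInvGlue (f x - u) :=
    funext fun p => by rw [pdy_comp sfun_diff hl, hly, sfun_deriv, mul_comm]
  rw [e1, e2, pdx_const_mul hG, pdx_const_mul hG, pdy_const_mul hG, pdy_const_mul hG,
    pdx_comp hgd hl, pdy_comp hgd hl, hlx, hly]
  have hm : 0 ≤ deriv expNegInvGlue (f p - u) := expNegInvGlue.monotone.deriv_nonneg
  have := mul_nonneg hm (sq_nonneg (f (1, 0) * a + f (0, 1) * b))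
  linarith

lemma exists_weights {K : Set (ℝ × ℝ)} (hK : Convex ℝ K) (hKc : IsClosed K) :
    ∃ V : ℕ → ℝ × ℝ → ℝ, (∀ n, GoodW K (V n)) ∧
      ∀ x, x ∉ K → Filter.Tendsto (fun n => V n x) Filter.atTop Filter.atTop := by
  let I := {fu : ((ℝ × ℝ) →L[ℝ] ℝ) × ℝ // ∀ a ∈ K, fu.1 a ≤ fu.2}
  let i0 : I := ⟨(0, 0), fun a _ => by simp⟩
  let U : I → Set (ℝ × ℝ) := fun i => {x | i.1.2 < i.1.1 x}
  have hU : ∀ i, IsOpen (U i) := fun i => isOpen_lt continuous_const i.1.1.continuous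
  obtain ⟨T, hT, hTU⟩ := TopologicalSpace.isOpen_iUnion_countable U hU
  obtain ⟨e, he⟩ := (hT.insert i0).exists_eq_range (insert_nonempty _ _)
  let S : ℕ → ℝ × ℝ → ℝ := fun n => Nat.rec (fun _ => 0)
    (fun k g x => g x + sfun ((e k).1.1 x - (e k).1.2)) n
  have hS0 : S 0 = fun _ => 0 := rfl
  have hS1 : ∀ n, S (n + 1) = fun x => S n x + sfun ((e n).1.1 x - (e n).1.2) := fun n => rfl
  have hSg : ∀ n, GoodW K (S n) := by
    intro n
    induction n with
    | zero => rw [hS0]; exact goodW_zero K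
    | succ n ih => rw [hS1]; exact ih.add (goodW_aff _ _ (e n).2)
  have hmono : ∀ x, Monotone fun n => S n x := fun x => monotone_nat_of_le_succ fun n => by
    rw [hS1]; linarith [sfun_nonneg ((e n).1.1 x - (e n).1.2)]
  refine ⟨fun n x => (n : ℝ) * S n x, fun n => (hSg n).smul (Nat.cast_nonneg n), fun x hx => ?_⟩
  obtain ⟨f, u, h1, h2⟩ := geometric_hahn_banach_closed_point hK hKc hx
  have hxU : x ∈ ⋃ i ∈ T, U i := by
    rw [hTU]
    exact mem_iUnion.2 ⟨⟨(f, u), fun a ha => (h1 a ha).le⟩, h2⟩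
  obtain ⟨i, hi, hxi⟩ := mem_iUnion₂.1 hxU
  have : i ∈ range e := he ▸ mem_insert_of_mem _ hi
  obtain ⟨k, rfl⟩ := this
  have hpos : 0 < sfun ((e k).1.1 x - (e k).1.2) := sfun_pos (sub_pos.2 hxi)
  have hge : ∀ n, k + 1 ≤ n → sfun ((e k).1.1 x - (e k).1.2) ≤ S n x := fun n hn => by
    have h3 := hmono x hn
    have h4 := (hSg k).nonneg x
    simp only [hS1] at h3
    linarith
  refine Filter.tendsto_atTop_mono' _ ?_ (tendsto_natCast_atTop_atTop.atTop_mul_const hpos)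
  filter_upwards [Filter.eventually_ge_atTop (k + 1)] with n hn
  exact mul_le_mul_of_nonneg_left (hge n hn) (Nat.cast_nonneg n)



/-! ### Cutoffs, extension and dilations -/

lemma exists_cutoff {K Ω : Set (ℝ × ℝ)} (hK : IsCompact K) (hΩ : IsOpen Ω) (h : K ⊆ Ω) :
    ∃ χ : ℝ × ℝ → ℝ, Sm χ ∧ HasCompactSupport χ ∧ tsupport χ ⊆ Ω ∧ (∀ x, 0 ≤ χ x) ∧
      (∀ x, χ x ≤ 1) ∧ ∃ U, IsOpen U ∧ K ⊆ U ∧ U ⊆ Ω ∧ ∀ x ∈ U, χ x = 1 := by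
  obtain ⟨L, hL, hKL, hLΩ⟩ := exists_compact_between hK hΩ h
  obtain ⟨f, h1, h2, h3⟩ := exists_contMDiffMap_one_nhds_of_subset_interior
    (n := (⊤ : ℕ∞)) (modelWithCornersSelf ℝ (ℝ × ℝ)) hK.isClosed hKL
  have hsup : tsupport f ⊆ L := closure_minimal (fun x hx => by
    by_contra hxL
    exact hx (h2 x hxL)) hL.isClosed
  obtain ⟨U, hU, hKU, hUe⟩ := eventually_nhdsSet_iff_exists.1 h1
  refine ⟨f, f.contMDiff.contDiff, hL.of_isClosed_subset (isClosed_tsupport _) hsup,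
    hsup.trans hLΩ, fun x => (h3 x).1, fun x => (h3 x).2, U ∩ interior L, hU.inter isOpen_interior,
    subset_inter hKU hKL, (inter_subset_right.trans interior_subset).trans hLΩ,
    fun x hx => hUe x hx.1⟩

lemma sm_mul_cutoff {Ω : Set (ℝ × ℝ)} (hΩ : IsOpen Ω) {φ χ : ℝ × ℝ → ℝ}
    (hφ : ContDiffOn ℝ (⊤ : ℕ∞) φ Ω) (hχ : Sm χ) (hs : tsupport χ ⊆ Ω) :
    Sm (fun x => χ x * φ x) := by
  refine contDiff_iff_contDiffAt.2 ?_
  intro x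
  by_cases hx : x ∈ tsupport χ
  · exact hχ.contDiffAt.mul (hφ.contDiffAt (hΩ.mem_nhds (hs hx)))
  · have : (fun x => χ x * φ x) =ᶠ[nhds x] fun _ => 0 := by
      filter_upwards [(isClosed_tsupport χ).isOpen_compl.mem_nhds hx] with y hy
      rw [image_eq_zero_of_notMem_tsupport hy, zero_mul]
    exact contDiffAt_const.congr_of_eventuallyEq this

lemma exists_ext {K Ω : Set (ℝ × ℝ)} (hK : IsCompact K) (hΩ : IsOpen Ω) (h : K ⊆ Ω)
    {φ : ℝ × ℝ → ℝ} (hφ : ContDiffOn ℝ (⊤ : ℕ∞) φ Ω) :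
    ∃ ψ : ℝ × ℝ → ℝ, Sm ψ ∧ HasCompactSupport ψ ∧
      ∃ U, IsOpen U ∧ K ⊆ U ∧ U ⊆ Ω ∧ ∀ x ∈ U, ψ x = φ x := by
  obtain ⟨χ, h1, h2, h3, -, -, U, hU, hKU, hUΩ, hU1⟩ := exists_cutoff hK hΩ h
  exact ⟨fun x => χ x * φ x, sm_mul_cutoff hΩ hφ h1 h3, h2.mul_right, U, hU, hKU, hUΩ,
    fun x hx => by simp [hU1 x hx]⟩

lemma pdx_congr {f g : ℝ × ℝ → ℝ} {p : ℝ × ℝ} (h : f =ᶠ[nhds p] g) : pdx f p = pdx g p := by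
  unfold pdx; rw [h.fderiv_eq]

lemma pdy_congr {f g : ℝ × ℝ → ℝ} {p : ℝ × ℝ} (h : f =ᶠ[nhds p] g) : pdy f p = pdy g p := by
  unfold pdy; rw [h.fderiv_eq]

lemma pdx_congr_nhds {f g : ℝ × ℝ → ℝ} {p : ℝ × ℝ} (h : f =ᶠ[nhds p] g) :
    pdx f =ᶠ[nhds p] pdx g := h.eventuallyEq_nhds.mono fun _ hx => pdx_congr hx

lemma pdy_congr_nhds {f g : ℝ × ℝ → ℝ} {p : ℝ × ℝ} (h : f =ᶠ[nhds p] g) :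
    pdy f =ᶠ[nhds p] pdy g := h.eventuallyEq_nhds.mono fun _ hx => pdy_congr hx

lemma smOn_pdx {Ω : Set (ℝ × ℝ)} (hΩ : IsOpen Ω) {φ : ℝ × ℝ → ℝ}
    (hφ : ContDiffOn ℝ (⊤ : ℕ∞) φ Ω) : ContDiffOn ℝ (⊤ : ℕ∞) (pdx φ) Ω := by
  have : ContDiffOn ℝ (⊤ : ℕ∞) (fderiv ℝ φ) Ω := hφ.fderiv_of_isOpen hΩ (by simp)
  exact this.clm_apply contDiffOn_const

lemma smOn_pdy {Ω : Set (ℝ × ℝ)} (hΩ : IsOpen Ω) {φ : ℝ × ℝ → ℝ}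
    (hφ : ContDiffOn ℝ (⊤ : ℕ∞) φ Ω) : ContDiffOn ℝ (⊤ : ℕ∞) (pdy φ) Ω := by
  have : ContDiffOn ℝ (⊤ : ℕ∞) (fderiv ℝ φ) Ω := hφ.fderiv_of_isOpen hΩ (by simp)
  exact this.clm_apply contDiffOn_const

/-- Scaling estimate. -/
lemma scale_le {S Ω : Set (ℝ × ℝ)} (hS : MeasurableSet S) (hΩ : MeasurableSet Ω) {a : ℝ × ℝ} {t : ℝ}
    (ht : 0 < t) (hmap : ∀ x ∈ S, a + t • x ∈ Ω) {f : ℝ × ℝ → ℝ} (hf : IntegrableOn f Ω)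
    (hf0 : ∀ x, 0 ≤ f x) :
    IntegrableOn (fun x => f (a + t • x)) S ∧
      ∫ x in S, f (a + t • x) ≤ (t ^ 2)⁻¹ * ∫ x in Ω, f x := by
  let F := Ω.indicator f
  have hF : Integrable F := (integrable_indicator_iff hΩ).2 hf
  have hF0 : ∀ x, 0 ≤ F x := fun x => indicator_nonneg (fun x _ => hf0 x) x
  have hF1 : Integrable (fun x => F (a + x)) := hF.comp_add_left a
  have hF2 : Integrable (fun x => F (a + t • x)) := hF1.comp_smul ht.ne'
  have hval : ∫ x, F (a + t • x) = (t ^ 2)⁻¹ * ∫ x in Ω, f x := by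
    have h1 := Measure.integral_comp_smul (volume : Measure (ℝ × ℝ)) (fun x => F (a + x)) t
    rw [h1, integral_add_left_eq_self F a, integral_indicator hΩ]
    simp
  have heq : EqOn (fun x => F (a + t • x)) (fun x => f (a + t • x)) S := fun x hx =>
    indicator_of_mem (hmap x hx) f
  refine ⟨hF2.integrableOn.congr_fun heq hS, ?_⟩
  rw [← setIntegral_congr_fun hS heq, ← hval]
  exact setIntegral_le_integral hF2 (Filter.Eventually.of_forall fun x => hF0 _)

lemma riesz_sq {α : Type*} [MeasurableSpace α] {μ : Measure α} {F : ℕ → α → ℝ} {g : α → ℝ}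
    (hF : ∀ n, MemLp (F n) 2 μ) (hg : MemLp g 2 μ)
    (hlim : ∀ᵐ x ∂μ, Filter.Tendsto (fun n => F n x) Filter.atTop (nhds (g x))) {b : ℕ → ℝ}
    (hb : Filter.Tendsto b Filter.atTop (nhds (∫ x, g x ^ 2 ∂μ)))
    (hFb : ∀ n, ∫ x, F n x ^ 2 ∂μ ≤ b n) :
    Filter.Tendsto (fun n => ∫ x, (F n x - g x) ^ 2 ∂μ) Filter.atTop (nhds 0) := by
  have hm : ∀ n, Integrable (fun x => min ((F n x + g x) ^ 2) (4 * g x ^ 2)) μ := fun n =>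
    Integrable.inf ((hF n).add hg).integrable_sq (hg.integrable_sq.const_mul 4)
  have ht : Filter.Tendsto (fun n => ∫ x, min ((F n x + g x) ^ 2) (4 * g x ^ 2) ∂μ) Filter.atTop
      (nhds (∫ x, 4 * g x ^ 2 ∂μ)) := by
    refine tendsto_integral_of_dominated_convergence (fun x => 4 * g x ^ 2) (fun n => (hm n).1)
      (hg.integrable_sq.const_mul 4) ?_ ?_
    · intro n
      refine Filter.Eventually.of_forall fun x => ?_
      rw [Real.norm_of_nonneg (le_min (by positivity) (by positivity))]
      exact min_le_right _ _
    · filter_upwards [hlim] with x hx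
      have := ((hx.add_const (g x)).pow 2).min (tendsto_const_nhds (x := 4 * g x ^ 2))
      rwa [show (g x + g x) ^ 2 = 4 * g x ^ 2 by ring, min_self] at this
  have hup : Filter.Tendsto (fun n => 2 * b n + 2 * ∫ x, g x ^ 2 ∂μ -
      ∫ x, min ((F n x + g x) ^ 2) (4 * g x ^ 2) ∂μ) Filter.atTop (nhds 0) := by
    have := ((hb.const_mul 2).add_const (2 * ∫ x, g x ^ 2 ∂μ)).sub ht
    rw [integral_const_mul] at this
    rwa [show 2 * (∫ x, g x ^ 2 ∂μ) + 2 * (∫ x, g x ^ 2 ∂μ) - 4 * (∫ x, g x ^ 2 ∂μ) = 0 by ring]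
      at this
  refine squeeze_zero (fun n => integral_nonneg fun x => sq_nonneg _) (fun n => ?_) hup
  have i1 := ((hF n).add hg).integrable_sq
  have i2 := ((hF n).sub hg).integrable_sq
  have e : ∫ x, (F n x - g x) ^ 2 ∂μ + ∫ x, (F n x + g x) ^ 2 ∂μ =
      2 * ∫ x, F n x ^ 2 ∂μ + 2 * ∫ x, g x ^ 2 ∂μ := by
    rw [← integral_const_mul, ← integral_const_mul, ← integral_add ((hF n).integrable_sq.const_mul 2)
      (hg.integrable_sq.const_mul 2)]
    refine (integral_add i2 i1).symm.trans ?_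
    congr 1; ext x
    simp only [Pi.add_apply, Pi.sub_apply]; ring
  have h3 : ∫ x, min ((F n x + g x) ^ 2) (4 * g x ^ 2) ∂μ ≤ ∫ x, (F n x + g x) ^ 2 ∂μ :=
    integral_mono (hm n) i1 fun x => min_le_left _ _
  have h4 := hFb n
  linarith

/-- `L²` convergence of dilations. -/
lemma dil_tendsto {Ω : Set (ℝ × ℝ)} (hΩ : IsOpen Ω) {p₀ : ℝ × ℝ} {t c : ℕ → ℝ}
    (ht0 : ∀ n, 0 < t n) (ht : Filter.Tendsto t Filter.atTop (nhds 1))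
    (hc0 : ∀ n, |c n| ≤ 1) (hc : Filter.Tendsto c Filter.atTop (nhds 1))
    (hmap : ∀ n, ∀ x ∈ Ω, (1 - t n) • p₀ + t n • x ∈ Ω) {g : ℝ × ℝ → ℝ} (hg : ContinuousOn g Ω)
    (hg2 : IntegrableOn (fun x => g x ^ 2) Ω) :
    (∀ n, MemLp (fun x => c n * g ((1 - t n) • p₀ + t n • x)) 2 (volume.restrict Ω)) ∧
    Filter.Tendsto (fun n => ∫ x in Ω, (c n * g ((1 - t n) • p₀ + t n • x) - g x) ^ 2)
      Filter.atTop (nhds 0) := by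
  have hΩm := hΩ.measurableSet
  have hgm : MemLp g 2 (volume.restrict Ω) :=
    (memLp_two_iff_integrable_sq (hg.aestronglyMeasurable hΩm)).2 hg2
  have hsc := fun n => scale_le hΩm hΩm (ht0 n) (hmap n) hg2 fun x => sq_nonneg (g x)
  have hFm : ∀ n, MemLp (fun x => c n * g ((1 - t n) • p₀ + t n • x)) 2 (volume.restrict Ω) := by
    intro n
    have hcont : ContinuousOn (fun x => g ((1 - t n) • p₀ + t n • x)) Ω :=
      hg.comp (by fun_prop) (hmap n)
    have : MemLp (fun x => g ((1 - t n) • p₀ + t n • x)) 2 (volume.restrict Ω) :=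
      (memLp_two_iff_integrable_sq (hcont.aestronglyMeasurable hΩm)).2 (hsc n).1
    exact this.const_mul (c n)
  refine ⟨hFm, riesz_sq hFm hgm ?_ (b := fun n => (t n ^ 2)⁻¹ * ∫ x in Ω, g x ^ 2) ?_ ?_⟩
  · filter_upwards [ae_restrict_mem hΩm] with x hx
    have h1 : Filter.Tendsto (fun n => (1 - t n) • p₀ + t n • x) Filter.atTop
        (nhds (((1 : ℝ) - 1) • p₀ + (1 : ℝ) • x)) :=
      ((tendsto_const_nhds.sub ht).smul_const p₀).add (ht.smul_const x)
    rw [sub_self, zero_smul, zero_add, one_smul] at h1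
    have h2 := ((hg.continuousAt (hΩ.mem_nhds hx)).tendsto.comp h1)
    have := hc.mul h2
    rw [one_mul] at this
    exact this
  · have := ((ht.pow 2).inv₀ (by norm_num)).mul_const (∫ x in Ω, g x ^ 2)
    simpa using this
  · intro n
    refine le_trans ?_ (hsc n).2
    refine integral_mono (hFm n).integrable_sq (hsc n).1 fun x => ?_
    show (c n * g ((1 - t n) • p₀ + t n • x)) ^ 2 ≤ g ((1 - t n) • p₀ + t n • x) ^ 2
    rw [mul_pow]
    have : c n ^ 2 ≤ 1 := by rw [← sq_abs]; exact pow_le_one₀ (abs_nonneg _) (hc0 n)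
    nlinarith [sq_nonneg (g ((1 - t n) • p₀ + t n • x))]

/-- Global smooth functions are dense in `H¹(Ω)`. -/
lemma h1_approx {Ω : Set (ℝ × ℝ)} (hΩ : IsOpen Ω) (hcv : Convex ℝ Ω) (hbd : Bornology.IsBounded Ω)
    (hne : Ω.Nonempty) {φ : ℝ × ℝ → ℝ} (hφ : ContDiffOn ℝ (⊤ : ℕ∞) φ Ω)
    (h0 : IntegrableOn (fun p => φ p ^ 2) Ω) (hx : IntegrableOn (fun p => pdx φ p ^ 2) Ω)
    (hy : IntegrableOn (fun p => pdy φ p ^ 2) Ω) {ε : ℝ} (hε : 0 < ε) :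
    ∃ v, Sm v ∧ HasCompactSupport v ∧ 
      ∫ p in Ω, ((pdx φ p - pdx v p) ^ 2 + (pdy φ p - pdy v p) ^ 2 + (φ p - v p) ^ 2) ≤ ε := by
  obtain ⟨p₀, hp₀⟩ := hne
  have hΩm := hΩ.measurableSet
  let t : ℕ → ℝ := fun n => 1 - 1 / ((n : ℝ) + 2)
  have htlt : ∀ n, t n < 1 := fun n => by
    have : 0 < 1 / ((n : ℝ) + 2) := by positivity
    simp only [t]; linarith
  have ht0 : ∀ n, 0 < t n := fun n => by
    have : 1 / ((n : ℝ) + 2) < 1 := by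
      rw [div_lt_one (by positivity)]; linarith [Nat.cast_nonneg (α := ℝ) n]
    simp only [t]; linarith
  have ht : Filter.Tendsto t Filter.atTop (nhds 1) := by
    have h1 := (tendsto_one_div_add_atTop_nhds_zero_nat (𝕜 := ℝ)).comp (Filter.tendsto_add_atTop_nat 1)
    have h2 := (tendsto_const_nhds (x := (1 : ℝ))).sub h1
    rw [sub_zero] at h2
    refine h2.congr fun n => ?_
    simp only [t, Function.comp]
    push_cast; ring_nf
  have hcl : ∀ n, ∀ x ∈ closure Ω, (1 - t n) • p₀ + t n • x ∈ Ω := fun n x hx => by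
    have := hcv.combo_interior_closure_mem_interior (by rwa [hΩ.interior_eq]) hx
      (sub_pos.2 (htlt n)) (ht0 n).le (by ring)
    rwa [hΩ.interior_eq] at this
  have hmap : ∀ n, ∀ x ∈ Ω, (1 - t n) • p₀ + t n • x ∈ Ω := fun n x hx => hcl n x (subset_closure hx)
  have habs : ∀ n, |t n| ≤ 1 := fun n => by rw [abs_of_pos (ht0 n)]; exact (htlt n).le
  obtain ⟨m0, l0⟩ := dil_tendsto hΩ ht0 ht (c := fun _ => 1) (by simp) tendsto_const_nhds hmap
    hφ.continuousOn h0
  obtain ⟨mx, lx⟩ := dil_tendsto hΩ ht0 ht habs ht hmap (smOn_pdx hΩ hφ).continuousOn hx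
  obtain ⟨my, ly⟩ := dil_tendsto hΩ ht0 ht habs ht hmap (smOn_pdy hΩ hφ).continuousOn hy
  have hsum := (lx.add ly).add l0
  rw [add_zero, add_zero] at hsum
  obtain ⟨n, hn⟩ := (hsum.eventually (gt_mem_nhds hε)).exists
  have hKc : IsCompact (Set.image (fun x => (1 - t n) • p₀ + t n • x) (closure Ω)) :=
    (hbd.isCompact_closure).image (by fun_prop)
  obtain ⟨ψ, hψ, hψc, U, hU, hKU, hUΩ, hUe⟩ := exists_ext hKc hΩ (by
    rintro _ ⟨x, hx, rfl⟩; exact hcl n x hx) hφ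
  have hψe : ∀ x ∈ Ω, ψ =ᶠ[nhds ((1 - t n) • p₀ + t n • x)] φ := fun x hx => by
    filter_upwards [hU.mem_nhds (hKU ⟨x, subset_closure hx, rfl⟩)] with y hy
    exact hUe y hy
  refine ⟨fun x => ψ ((1 - t n) • p₀ + t n • x), ?_, ?_, ?_⟩
  · exact hψ.comp (contDiff_const.add (contDiff_id.const_smul (t n)))
  · exact hψc.comp_homeomorph ((Homeomorph.smulOfNeZero (t n) (ht0 n).ne').trans
      (Homeomorph.addLeft ((1 - t n) • p₀)))
  · refine le_trans (le_of_eq ?_) hn.le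
    have hgm : ∀ g : ℝ × ℝ → ℝ, ContinuousOn g Ω → IntegrableOn (fun x => g x ^ 2) Ω →
        MemLp g 2 (volume.restrict Ω) := fun g h1 h2 =>
      (memLp_two_iff_integrable_sq (h1.aestronglyMeasurable hΩm)).2 h2
    have ix := ((mx n).sub (hgm _ (smOn_pdx hΩ hφ).continuousOn hx)).integrable_sq
    have iy := ((my n).sub (hgm _ (smOn_pdy hΩ hφ).continuousOn hy)).integrable_sq
    have i0 := ((m0 n).sub (hgm _ hφ.continuousOn h0)).integrable_sq
    refine Eq.trans ?_ ((integral_add (ix.add iy) i0).trans (congrArg (· + _) (integral_add ix iy)))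
    refine setIntegral_congr_fun hΩm fun x hx => ?_
    have e := hψe x hx
    simp only [Pi.sub_apply, Pi.add_apply]
    rw [pdx_affine (hψ.diff _), pdy_affine (hψ.diff _), pdx_congr e, pdy_congr e, e.eq_of_nhds]
    ring



/-! ### The main approximation -/

lemma memLp_smc {f : ℝ × ℝ → ℝ} (hf : Sm f) (hc : HasCompactSupport f) : MemLp f 2 :=
  hf.continuous.memLp_of_hasCompactSupport hc

/-- Energy estimate. -/
lemma energy_est {Ω : Set (ℝ × ℝ)} (hΩ : IsOpen Ω) {φ V u v f : ℝ × ℝ → ℝ} {c : ℝ}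
    (h0 : MemLp φ 2 (volume.restrict Ω)) (hx : MemLp (pdx φ) 2 (volume.restrict Ω))
    (hy : MemLp (pdy φ) 2 (volume.restrict Ω))
    (hf : f = Ω.indicator (fun p => c * φ p)) (hfm : MemLp f 2)
    (hweak : ∀ w, Sm w → HasCompactSupport w →
      ∫ p in Ω, (pdx φ p * pdx w p + pdy φ p * pdy w p + φ p * w p) = ∫ p in Ω, c * φ p * w p)
    (hV : GoodW (closure Ω) V) (hu : Sm u) (huc : HasCompactSupport u) (hv : Sm v)
    (hvc : HasCompactSupport v) :
    ∫ p in Ω, (u p - v p) ^ 2 ≤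
      2 * ((∫ p in Ω, ((pdx φ p - pdx v p) ^ 2 + (pdy φ p - pdy v p) ^ 2 + (φ p - v p) ^ 2)) +
        (∫ p in Ωᶜ, (gradSq v p + v p ^ 2) * Real.exp (-V p)) +
        ∫ p, (Real.exp (-V p / 2) * opL V u p - f p) ^ 2) := by
  have hΩm := hΩ.measurableSet
  set w : ℝ × ℝ → ℝ := fun p => u p - v p with hw_def
  have hw : Sm w := hu.sub hv
  have hwc : HasCompactSupport w := huc.sub hvc
  have hwx : ∀ p, pdx w p = pdx u p - pdx v p := fun p => pdx_sub hu hv p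
  have hwy : ∀ p, pdy w p = pdy u p - pdy v p := fun p => pdy_sub hu hv p
  have hW := hV.sm.weight
  have hWh := hV.sm.whalf
  have hV0 : ∀ p ∈ Ω, V p = 0 := fun p hp => hV.zero p (subset_closure hp)
  have hcs : ∀ g : ℝ × ℝ → ℝ, HasCompactSupport (fun p => w p * g p) := fun g => hwc.mul_right
  set r : ℝ × ℝ → ℝ := fun p => Real.exp (-V p / 2) * opL V u p - f p with hr_def
  have hopc : HasCompactSupport (opL V u) := HasCompactSupport.intro huc fun p hp => by
    obtain ⟨a, b, c, d, e, f, g⟩ := all_zero hp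
    simp [opL, a, b, c, d, g]
  have hr : MemLp r 2 := (memLp_smc (hWh.mul (hV.sm.opL hu)) hopc.mul_left).sub hfm
  have hwh : MemLp (fun p => w p * Real.exp (-V p / 2)) 2 := memLp_smc (hw.mul hWh) (hcs _)
  have hEW : ∀ p, Real.exp (-V p / 2) * Real.exp (-V p / 2) = Real.exp (-V p) := fun p => by
    rw [← Real.exp_add]; ring_nf
  -- the energy density
  set A : ℝ × ℝ → ℝ := fun p => (gradSq w p + w p ^ 2) * Real.exp (-V p) with hA_def
  have hAi : Integrable A := by
    refine integrable_of_smc ((hw.gradSq.add (hw.pow 2)).mul hW) (HasCompactSupport.intro hwc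
      fun p hp => ?_)
    obtain ⟨a, b, c, -⟩ := all_zero hp
    show ((pdx w p) ^ 2 + (pdy w p) ^ 2 + w p ^ 2) * Real.exp (-V p) = 0
    rw [a, b, c]; simp
  set R : ℝ × ℝ → ℝ := fun p =>
    (pdx v p * pdx w p + pdy v p * pdy w p + v p * w p) * Real.exp (-V p) with hR_def
  have hRi : Integrable R := by
    refine integrable_of_smc ((((hv.pdx.mul hw.pdx).add (hv.pdy.mul hw.pdy)).add (hv.mul hw)).mul hW)
      (HasCompactSupport.intro hwc fun p hp => ?_)
    obtain ⟨a, b, c, -⟩ := all_zero hp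
    show (pdx v p * pdx w p + pdy v p * pdy w p + v p * w p) * Real.exp (-V p) = 0
    rw [a, b, c]; simp
  set Q : ℝ × ℝ → ℝ := fun p => pdx φ p * pdx w p + pdy φ p * pdy w p + φ p * w p with hQ_def
  have hQi : IntegrableOn Q Ω :=
    ((hx.integrable_mul ((memLp_smc hw.pdx hwc.pdx).restrict Ω)).add
      (hy.integrable_mul ((memLp_smc hw.pdy hwc.pdy).restrict Ω))).add
      (h0.integrable_mul ((memLp_smc hw hwc).restrict Ω))
  have hPi : Integrable (fun p => w p * Real.exp (-V p / 2) * r p) := hwh.integrable_mul hr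
  have hPf : Integrable (fun p => w p * Real.exp (-V p / 2) * f p) := hwh.integrable_mul hfm
  have hUi : Integrable (fun p =>
      (pdx u p * pdx w p + pdy u p * pdy w p + u p * w p) * Real.exp (-V p)) := by
    refine integrable_of_smc ((((hu.pdx.mul hw.pdx).add (hu.pdy.mul hw.pdy)).add (hu.mul hw)).mul hW)
      (HasCompactSupport.intro hwc fun p hp => ?_)
    obtain ⟨a, b, c, -⟩ := all_zero hp
    simp [a, b, c]
  have e1 : ∫ p, A p = (∫ p, (pdx u p * pdx w p + pdy u p * pdy w p + u p * w p) * Real.exp (-V p)) -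
      ∫ p, R p := by
    rw [← integral_sub hUi hRi]
    congr 1; ext p
    simp only [hA_def, hR_def, gradSq]
    rw [hwx, hwy]
    simp only [hw_def]; ring
  have e2 : ∫ p, (pdx u p * pdx w p + pdy u p * pdy w p + u p * w p) * Real.exp (-V p) =
      (∫ p, w p * Real.exp (-V p / 2) * r p) + ∫ p, w p * Real.exp (-V p / 2) * f p := by
    rw [← green hV.sm hu hw hwc, ← integral_add hPi hPf]
    congr 1; ext p
    simp only [hr_def]
    rw [← hEW]; ring
  have e3 : ∫ p, w p * Real.exp (-V p / 2) * f p = ∫ p in Ω, Q p := by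
    rw [hweak w hw hwc, ← integral_indicator hΩm]
    congr 1; ext p
    by_cases hp : p ∈ Ω
    · simp [hf, hp, hV0 p hp]; ring
    · simp [hf, hp]
  have e4 : ∫ p, R p = (∫ p in Ω, R p) + ∫ p in Ωᶜ, R p := (integral_add_compl hΩm hRi).symm
  have e5 : ∫ p, A p = (∫ p in Ω, A p) + ∫ p in Ωᶜ, A p := (integral_add_compl hΩm hAi).symm
  have b1 : ∫ p, w p * Real.exp (-V p / 2) * r p ≤ ∫ p, ((1 / 4) * A p + r p ^ 2) := by
    refine integral_mono hPi ((hAi.const_mul _).add hr.integrable_sq) fun p => ?_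
    show w p * Real.exp (-V p / 2) * r p ≤ (1 / 4) * A p + r p ^ 2
    have h1 : w p ^ 2 * Real.exp (-V p) ≤ A p := by
      simp only [hA_def]
      refine mul_le_mul_of_nonneg_right ?_ (Real.exp_pos _).le
      have : 0 ≤ gradSq w p := by unfold gradSq; positivity
      linarith
    rw [← hEW] at h1
    nlinarith [sq_nonneg (w p * Real.exp (-V p / 2) / 2 - r p)]
  rw [integral_add (hAi.const_mul _) hr.integrable_sq, integral_const_mul] at b1
  have hT1 : IntegrableOn (fun p => (pdx φ p - pdx v p) ^ 2 + (pdy φ p - pdy v p) ^ 2 +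
      (φ p - v p) ^ 2) Ω :=
    ((hx.sub ((memLp_smc hv.pdx hvc.pdx).restrict Ω)).integrable_sq.add
      (hy.sub ((memLp_smc hv.pdy hvc.pdy).restrict Ω)).integrable_sq).add
      (h0.sub ((memLp_smc hv hvc).restrict Ω)).integrable_sq
  have b2 : ∫ p in Ω, (Q p - R p) ≤ ∫ p in Ω, ((1 / 4) * A p +
      ((pdx φ p - pdx v p) ^ 2 + (pdy φ p - pdy v p) ^ 2 + (φ p - v p) ^ 2)) := by
    refine setIntegral_mono_on (hQi.sub hRi.integrableOn)
      ((hAi.const_mul _).integrableOn.add hT1) hΩm fun p hp => ?_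
    simp only [hQ_def, hR_def, hA_def, hV0 p hp, neg_zero, Real.exp_zero, mul_one, gradSq]
    nlinarith [sq_nonneg (pdx w p / 2 - (pdx φ p - pdx v p)),
      sq_nonneg (pdy w p / 2 - (pdy φ p - pdy v p)), sq_nonneg (w p / 2 - (φ p - v p))]
  rw [integral_add (hAi.const_mul _).integrableOn hT1, integral_const_mul,
    integral_sub hQi hRi.integrableOn] at b2
  have hT2 : Integrable (fun p => (gradSq v p + v p ^ 2) * Real.exp (-V p)) := by
    refine integrable_of_smc ((hv.gradSq.add (hv.pow 2)).mul hW) (HasCompactSupport.intro hvc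
      fun p hp => ?_)
    obtain ⟨a, b, c, -⟩ := all_zero hp
    simp [gradSq, a, b, c]
  have b3 : ∫ p in Ωᶜ, -R p ≤ ∫ p in Ωᶜ, ((1 / 4) * A p +
      (gradSq v p + v p ^ 2) * Real.exp (-V p)) := by
    refine setIntegral_mono_on hRi.neg.integrableOn
      ((hAi.const_mul _).integrableOn.add hT2.integrableOn) hΩm.compl fun p hp => ?_
    have hE := Real.exp_pos (-V p)
    have : 0 ≤ ((pdx w p / 2 + pdx v p) ^ 2 + (pdy w p / 2 + pdy v p) ^ 2 +
      (w p / 2 + v p) ^ 2) * Real.exp (-V p) := by positivity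
    simp only [hR_def, hA_def, gradSq]
    linarith
  rw [integral_add (hAi.const_mul _).integrableOn hT2.integrableOn, integral_const_mul,
    integral_neg] at b3
  have b4 : ∫ p in Ω, w p ^ 2 ≤ ∫ p in Ω, A p := by
    refine setIntegral_mono_on (memLp_smc hw hwc).integrable_sq.integrableOn hAi.integrableOn hΩm
      fun p hp => ?_
    simp only [hA_def, hV0 p hp, neg_zero, Real.exp_zero, mul_one]
    have : 0 ≤ gradSq w p := by unfold gradSq; positivity
    linarith
  have b5 : 0 ≤ ∫ p in Ωᶜ, A p := integral_nonneg fun p => by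
    simp only [hA_def, gradSq]
    have hE := Real.exp_pos (-V p)
    positivity
  linarith

lemma outer_tendsto {Ω : Set (ℝ × ℝ)} (hcv : Convex ℝ Ω) {V : ℕ → ℝ × ℝ → ℝ}
    (hV : ∀ n, GoodW (closure Ω) (V n))
    (hVt : ∀ x, x ∉ closure Ω → Filter.Tendsto (fun n => V n x) Filter.atTop Filter.atTop)
    {g : ℝ × ℝ → ℝ} (hg : Integrable g) :
    Filter.Tendsto (fun n => ∫ p in Ωᶜ, g p * Real.exp (-V n p)) Filter.atTop (nhds 0) := by
  have hfr : ∀ᵐ x : ℝ × ℝ, x ∉ frontier Ω :=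
    measure_eq_zero_iff_ae_notMem.1 (hcv.addHaar_frontier volume)
  have hcl : NullMeasurableSet Ω (volume : Measure (ℝ × ℝ)) := hcv.nullMeasurableSet volume
  have : Filter.Tendsto (fun n => ∫ p in Ωᶜ, g p * Real.exp (-V n p)) Filter.atTop
      (nhds (∫ p in Ωᶜ, (0 : ℝ))) := by
    refine tendsto_integral_of_dominated_convergence (fun p => |g p|) (fun n => ?_)
      hg.abs.integrableOn (fun n => ?_) ?_
    · exact hg.1.restrict.mul (hV n).sm.weight.continuous.aestronglyMeasurable
    · refine Filter.Eventually.of_forall fun p => ?_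
      rw [Real.norm_eq_abs, abs_mul, abs_of_pos (Real.exp_pos _)]
      refine mul_le_of_le_one_right (abs_nonneg _) ?_
      rw [Real.exp_le_one_iff]
      linarith [(hV n).nonneg p]
    · have h1 : ∀ᵐ x ∂(volume.restrict Ωᶜ), x ∈ Ωᶜ := ae_restrict_mem₀ hcl.compl
      filter_upwards [h1, ae_restrict_of_ae hfr] with x hx hx2
      have hx3 : x ∉ closure Ω := fun h => hx2 ⟨h, fun hi => hx (interior_subset hi)⟩
      have := (Real.tendsto_exp_neg_atTop_nhds_zero.comp (hVt x hx3)).const_mul (g x)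
      rw [mul_zero] at this
      exact this
  simpa using this

/-- Uniformly `H²`-bounded approximations. -/
lemma main_approx {Ω : Set (ℝ × ℝ)} (hΩ : IsOpen Ω) (hcv : Convex ℝ Ω)
    (hbd : Bornology.IsBounded Ω) (hne : Ω.Nonempty) {φ : ℝ × ℝ → ℝ} {h : ℝ} (hh : 0 < h)
    (hφ : ContDiffOn ℝ (⊤ : ℕ∞) φ Ω)
    (hL2 : IntegrableOn (fun p => φ p ^ 2) Ω) (hgrad : IntegrableOn (gradSq φ) Ω)
    (hweak : ∀ v : ℝ × ℝ → ℝ, ContDiff ℝ (⊤ : ℕ∞) v → (∃ M : ℝ, ∀ p, |v p| ≤ M) →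
      (∃ M : ℝ, ∀ p, ‖fderiv ℝ v p‖ ≤ M) →
      h ^ 2 * ∫ p in Ω, (pdx φ p * pdx v p + pdy φ p * pdy v p) = ∫ p in Ω, φ p * v p) :
    ∃ M : ℝ, 0 ≤ M ∧ ∀ ε : ℝ, 0 < ε → ∃ u, Sm u ∧ HasCompactSupport u ∧
      ∫ p in Ω, (φ p - u p) ^ 2 ≤ ε ∧ ∫ p in Ω, (hess2 u p + gradSq u p + u p ^ 2) ≤ M := by
  have hΩm := hΩ.measurableSet
  have hcx := (smOn_pdx hΩ hφ).continuousOn.aestronglyMeasurable (μ := volume) hΩm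
  have hcy := (smOn_pdy hΩ hφ).continuousOn.aestronglyMeasurable (μ := volume) hΩm
  have hx2 : IntegrableOn (fun p => pdx φ p ^ 2) Ω := by
    refine hgrad.mono' (hcx.pow 2) (Filter.Eventually.of_forall fun p => ?_)
    rw [Real.norm_of_nonneg (sq_nonneg _)]
    unfold gradSq; linarith [sq_nonneg (pdy φ p)]
  have hy2 : IntegrableOn (fun p => pdy φ p ^ 2) Ω := by
    refine hgrad.mono' (hcy.pow 2) (Filter.Eventually.of_forall fun p => ?_)
    rw [Real.norm_of_nonneg (sq_nonneg _)]
    unfold gradSq; linarith [sq_nonneg (pdx φ p)]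
  have h0 : MemLp φ 2 (volume.restrict Ω) :=
    (memLp_two_iff_integrable_sq (hφ.continuousOn.aestronglyMeasurable hΩm)).2 hL2
  have hx : MemLp (pdx φ) 2 (volume.restrict Ω) := (memLp_two_iff_integrable_sq hcx).2 hx2
  have hy : MemLp (pdy φ) 2 (volume.restrict Ω) := (memLp_two_iff_integrable_sq hcy).2 hy2
  set c : ℝ := 1 / h ^ 2 + 1 with hc
  set f : ℝ × ℝ → ℝ := Ω.indicator (fun p => c * φ p) with hf
  have hfm : MemLp f 2 := (memLp_indicator_iff_restrict hΩm).2 (h0.const_mul c)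
  have hweak' : ∀ w, Sm w → HasCompactSupport w →
      ∫ p in Ω, (pdx φ p * pdx w p + pdy φ p * pdy w p + φ p * w p) = ∫ p in Ω, c * φ p * w p := by
    intro w hw hwc
    have h1 := hweak w hw (hwc.exists_bound_of_continuous hw.continuous)
      ((hwc.fderiv (𝕜 := ℝ)).exists_bound_of_continuous (hw.continuous_fderiv (by simp)))
    have i1 : IntegrableOn (fun p => pdx φ p * pdx w p + pdy φ p * pdy w p) Ω :=
      (hx.integrable_mul ((memLp_smc hw.pdx hwc.pdx).restrict Ω)).add
        (hy.integrable_mul ((memLp_smc hw.pdy hwc.pdy).restrict Ω))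
    have i2 : IntegrableOn (fun p => φ p * w p) Ω :=
      h0.integrable_mul ((memLp_smc hw hwc).restrict Ω)
    rw [integral_add i1 i2]
    simp only [mul_assoc]
    rw [integral_const_mul, ← h1, hc]
    have : h ^ 2 ≠ 0 := by positivity
    field_simp
  obtain ⟨V, hV, hVt⟩ := exists_weights hcv.closure isClosed_closure
  refine ⟨2 * (1 + ∫ p, f p ^ 2), ?_, fun ε hε => ?_⟩
  · have : 0 ≤ ∫ p, f p ^ 2 := integral_nonneg fun p => sq_nonneg _
    positivity
  obtain ⟨v, hv, hvc, hve⟩ := h1_approx hΩ hcv hbd hne hφ hL2 hx2 hy2 (ε := ε / 16) (by positivity)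
  have hgi : Integrable (fun p => gradSq v p + v p ^ 2) := by
    refine integrable_of_smc (hv.gradSq.add (hv.pow 2)) (HasCompactSupport.intro hvc
      fun p hp => ?_)
    obtain ⟨a, b, c, -⟩ := all_zero hp
    simp [gradSq, a, b, c]
  obtain ⟨n, hn⟩ := ((outer_tendsto hcv hV hVt hgi).eventually
    (gt_mem_nhds (show 0 < ε / 16 by positivity))).exists
  obtain ⟨u, hu, huc, hue⟩ := range_dense (hV n).sm hfm (ε := min 1 (ε / 16)) (by positivity)
  have hue1 := hue.trans (min_le_left _ _)
  have hue2 := hue.trans (min_le_right _ _)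
  refine ⟨u, hu, huc, ?_, ?_⟩
  · have hE := energy_est hΩ h0 hx hy hf hfm hweak' (hV n) hu huc hv hvc
    have iv := (h0.sub ((memLp_smc hv hvc).restrict Ω)).integrable_sq
    have iu := (h0.sub ((memLp_smc hu huc).restrict Ω)).integrable_sq
    have iw := (memLp_smc (hu.sub hv) (huc.sub hvc)).integrable_sq.integrableOn (s := Ω)
    have ix := (hx.sub ((memLp_smc hv.pdx hvc.pdx).restrict Ω)).integrable_sq
    have iy := (hy.sub ((memLp_smc hv.pdy hvc.pdy).restrict Ω)).integrable_sq
    have b1 : ∫ p in Ω, (φ p - u p) ^ 2 ≤ ∫ p in Ω, (2 * (φ p - v p) ^ 2 + 2 * (u p - v p) ^ 2) := by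
      refine integral_mono iu ((iv.const_mul 2).add (iw.const_mul 2)) fun p => ?_
      show (φ p - u p) ^ 2 ≤ 2 * (φ p - v p) ^ 2 + 2 * (u p - v p) ^ 2
      nlinarith [sq_nonneg ((φ p - v p) + (u p - v p))]
    have b2 : ∫ p in Ω, (2 * (φ p - v p) ^ 2 + 2 * (u p - v p) ^ 2) =
        2 * (∫ p in Ω, (φ p - v p) ^ 2) + 2 * ∫ p in Ω, (u p - v p) ^ 2 := by
      rw [← integral_const_mul, ← integral_const_mul]
      exact integral_add (iv.const_mul 2) (iw.const_mul 2)
    have b3 : ∫ p in Ω, (φ p - v p) ^ 2 ≤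
        ∫ p in Ω, ((pdx φ p - pdx v p) ^ 2 + (pdy φ p - pdy v p) ^ 2 + (φ p - v p) ^ 2) := by
      refine integral_mono iv ((ix.add iy).add iv) fun p => ?_
      show (φ p - v p) ^ 2 ≤ (pdx φ p - pdx v p) ^ 2 + (pdy φ p - pdy v p) ^ 2 + (φ p - v p) ^ 2
      nlinarith [sq_nonneg (pdx φ p - pdx v p), sq_nonneg (pdy φ p - pdy v p)]
    linarith
  · have hB := bochner (hV n).sm hu huc (hV n).conv
    have hW := (hV n).sm.weight
    have hopc : HasCompactSupport (opL (V n) u) := HasCompactSupport.intro huc fun p hp => by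
      obtain ⟨a, b, c, d, e, f, g⟩ := all_zero hp
      simp [opL, a, b, c, d, g]
    have hm1 : MemLp (fun p => Real.exp (-V n p / 2) * opL (V n) u p) 2 :=
      memLp_smc ((hV n).sm.whalf.mul ((hV n).sm.opL hu)) hopc.mul_left
    have hr := (hm1.sub hfm).integrable_sq
    have b1 : ∫ p, (opL (V n) u p) ^ 2 * Real.exp (-V n p) ≤
        ∫ p, (2 * (Real.exp (-V n p / 2) * opL (V n) u p - f p) ^ 2 + 2 * f p ^ 2) := by
      have e : (fun p => (opL (V n) u p) ^ 2 * Real.exp (-V n p)) =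
          fun p => (Real.exp (-V n p / 2) * opL (V n) u p) ^ 2 := by
        ext p
        rw [mul_pow, ← Real.exp_nat_mul, mul_comm]
        congr 2; push_cast; ring
      rw [e]
      refine integral_mono hm1.integrable_sq ((hr.const_mul 2).add (hfm.integrable_sq.const_mul 2))
        fun p => ?_
      show (Real.exp (-V n p / 2) * opL (V n) u p) ^ 2 ≤
        2 * (Real.exp (-V n p / 2) * opL (V n) u p - f p) ^ 2 + 2 * f p ^ 2
      nlinarith [sq_nonneg (Real.exp (-V n p / 2) * opL (V n) u p - 2 * f p)]
    have b2 : ∫ p, (2 * (Real.exp (-V n p / 2) * opL (V n) u p - f p) ^ 2 + 2 * f p ^ 2) =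
        2 * (∫ p, (Real.exp (-V n p / 2) * opL (V n) u p - f p) ^ 2) + 2 * ∫ p, f p ^ 2 := by
      rw [← integral_const_mul, ← integral_const_mul]
      exact integral_add (hr.const_mul 2) (hfm.integrable_sq.const_mul 2)
    have hHi : Integrable (fun p => (hess2 u p + gradSq u p + u p ^ 2) * Real.exp (-V n p)) := by
      refine integrable_of_smc (((hu.hess2.add hu.gradSq).add (hu.pow 2)).mul hW)
        (HasCompactSupport.intro huc fun p hp => ?_)
      obtain ⟨a, b, c, d, e, f, g⟩ := all_zero hp
      simp [gradSq, hess2, a, b, c, d, e, f, g]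
    have b3 : ∫ p in Ω, (hess2 u p + gradSq u p + u p ^ 2) ≤
        ∫ p, (hess2 u p + gradSq u p + u p ^ 2) * Real.exp (-V n p) := by
      rw [setIntegral_congr_fun hΩm (g := fun p => (hess2 u p + gradSq u p + u p ^ 2) *
        Real.exp (-V n p)) fun p hp => by
          simp [(hV n).zero p (subset_closure hp)]]
      refine setIntegral_le_integral hHi (Filter.Eventually.of_forall fun p => ?_)
      have := Real.exp_pos (-V n p)
      simp only [hess2, gradSq, Pi.zero_apply]
      positivity
    linarith



/-! ### Second derivatives are square integrable -/

/-- Abstract first order partial derivative. -/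
structure PDop (P : (ℝ × ℝ → ℝ) → (ℝ × ℝ → ℝ)) : Prop where
  sm : ∀ f, Sm f → Sm (P f)
  tsup : ∀ f, tsupport (P f) ⊆ tsupport f
  mul : ∀ f g, Sm f → Sm g → ∀ p, P (fun q => f q * g q) p = P f p * g p + f p * P g p
  int : ∀ f, Sm f → HasCompactSupport f → ∫ p, P f p = 0
  smOn : ∀ (Ω : Set (ℝ × ℝ)) f, IsOpen Ω → ContDiffOn ℝ (⊤ : ℕ∞) f Ω →
    ContDiffOn ℝ (⊤ : ℕ∞) (P f) Ω
  congr : ∀ f g p, f =ᶠ[nhds p] g → P f =ᶠ[nhds p] P g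

lemma pdop_x : PDop pdx :=
  ⟨fun _ h => h.pdx, fun _ => tsupport_pdx, fun _ _ hf hg => pdx_mul hf hg,
    fun _ hf hc => integral_pdx hf hc, fun _ _ hΩ hf => smOn_pdx hΩ hf,
    fun _ _ _ h => pdx_congr_nhds h⟩

lemma pdop_y : PDop pdy :=
  ⟨fun _ h => h.pdy, fun _ => tsupport_pdy, fun _ _ hf hg => pdy_mul hf hg,
    fun _ hf hc => integral_pdy hf hc, fun _ _ hΩ hf => smOn_pdy hΩ hf,
    fun _ _ _ h => pdy_congr_nhds h⟩

lemma PDop.compact {P : (ℝ × ℝ → ℝ) → (ℝ × ℝ → ℝ)} (hP : PDop P) {f : ℝ × ℝ → ℝ}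
    (hf : HasCompactSupport f) : HasCompactSupport (P f) :=
  IsCompact.of_isClosed_subset hf (isClosed_tsupport _) (hP.tsup f)

lemma PDop.ibp {P : (ℝ × ℝ → ℝ) → (ℝ × ℝ → ℝ)} (hP : PDop P) {f g : ℝ × ℝ → ℝ}
    (hf : Sm f) (hg : Sm g) (hc : HasCompactSupport f) :
    ∫ p, f p * P g p = - ∫ p, P f p * g p := by
  have h := hP.int _ (hf.mul hg) hc.mul_right
  simp only [hP.mul f g hf hg] at h
  rw [integral_add (integrable_of_smc ((hP.sm f hf).mul hg) (hP.compact hc).mul_right)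
    (integrable_of_smc (hf.mul (hP.sm g hg)) hc.mul_right)] at h
  linarith

lemma PDop.ibp2 {P Q : (ℝ × ℝ → ℝ) → (ℝ × ℝ → ℝ)} (hP : PDop P) (hQ : PDop Q)
    {Ω : Set (ℝ × ℝ)} (hΩ : IsOpen Ω) {φ ζ : ℝ × ℝ → ℝ} (hφ : ContDiffOn ℝ (⊤ : ℕ∞) φ Ω)
    (hζ : Sm ζ) (hc : HasCompactSupport ζ) (hs : tsupport ζ ⊆ Ω) :
    ∫ p, ζ p * P (Q φ) p = ∫ p, Q (P ζ) p * φ p := by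
  obtain ⟨ψ, hψ, -, U, hU, hKU, -, hUψ⟩ := exists_ext hc hΩ hs hφ
  have h1 : (fun p => ζ p * P (Q φ) p) = fun p => ζ p * P (Q ψ) p := by
    ext p
    by_cases hp : p ∈ tsupport ζ
    · have : φ =ᶠ[nhds p] ψ := by
        filter_upwards [hU.mem_nhds (hKU hp)] with x hx using (hUψ x hx).symm
      rw [(hP.congr _ _ p (hQ.congr _ _ p this)).eq_of_nhds]
    · rw [image_eq_zero_of_notMem_tsupport hp]; simp
  have h2 : (fun p => Q (P ζ) p * φ p) = fun p => Q (P ζ) p * ψ p := by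
    ext p
    by_cases hp : p ∈ tsupport ζ
    · rw [hUψ p (hKU hp)]
    · rw [image_eq_zero_of_notMem_tsupport (fun h => hp (hP.tsup _ (hQ.tsup _ h)))]; simp
  rw [h1, h2, hP.ibp hζ (hQ.sm _ hψ) hc, hQ.ibp (hP.sm _ hζ) hψ (hP.compact hc), neg_neg]

lemma second_int {P Q : (ℝ × ℝ → ℝ) → (ℝ × ℝ → ℝ)} (hP : PDop P) (hQ : PDop Q)
    (hPQ : ∀ u p, P (Q u) p ^ 2 ≤ hess2 u p)
    {Ω : Set (ℝ × ℝ)} (hΩ : IsOpen Ω) (hbd : Bornology.IsBounded Ω) {φ : ℝ × ℝ → ℝ}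
    (hφ : ContDiffOn ℝ (⊤ : ℕ∞) φ Ω) (hL2 : IntegrableOn (fun p => φ p ^ 2) Ω) {M : ℝ}
    (happ : ∀ ε : ℝ, 0 < ε → ∃ u, Sm u ∧ HasCompactSupport u ∧
      ∫ p in Ω, (φ p - u p) ^ 2 ≤ ε ∧ ∫ p in Ω, (hess2 u p + gradSq u p + u p ^ 2) ≤ M) :
    IntegrableOn (fun p => P (Q φ) p ^ 2) Ω := by
  have hΩm := hΩ.measurableSet
  have h0 : MemLp φ 2 (volume.restrict Ω) :=
    (memLp_two_iff_integrable_sq (hφ.continuousOn.aestronglyMeasurable hΩm)).2 hL2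
  have hp := hP.smOn Ω _ hΩ (hQ.smOn Ω _ hΩ hφ)
  have key : ∀ K, IsCompact K → K ⊆ Ω → ∫⁻ p in K, ENNReal.ofReal (P (Q φ) p ^ 2) ≤
      ENNReal.ofReal M := by
    intro K hK hKΩ
    obtain ⟨χ, h1, h2, h3, h4, h5, U, hU, hKU, hUΩ, hU1⟩ := exists_cutoff hK hΩ hKΩ
    set ζ : ℝ × ℝ → ℝ := fun x => χ x * P (Q φ) x with hζd
    have hζ : Sm ζ := sm_mul_cutoff hΩ hp h1 h3
    have hζc : HasCompactSupport ζ := h2.mul_right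
    have hζs : tsupport ζ ⊆ Ω := (tsupport_mul_subset_left).trans h3
    have hη : Sm (Q (P ζ)) := hQ.sm _ (hP.sm _ hζ)
    have hηc : HasCompactSupport (Q (P ζ)) := hQ.compact (hP.compact hζc)
    have hηm := memLp_smc hη hηc
    have hηz : ∀ p, p ∉ Ω → Q (P ζ) p = 0 := fun p hpn =>
      image_eq_zero_of_notMem_tsupport fun h => hpn (hζs (hP.tsup _ (hQ.tsup _ h)))
    have hI : Integrable (fun p => ζ p * P (Q φ) p) := by
      have : Sm (fun p => χ p * (P (Q φ) p * P (Q φ) p)) := sm_mul_cutoff hΩ (hp.mul hp) h1 h3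
      have e : (fun p => ζ p * P (Q φ) p) = fun p => χ p * (P (Q φ) p * P (Q φ) p) := by
        ext p; simp only [hζd]; ring
      rw [e]
      exact integrable_of_smc this h2.mul_right
    have hnn : ∀ p, 0 ≤ ζ p * P (Q φ) p := fun p => by
      simp only [hζd]
      nlinarith [h4 p, mul_nonneg (h4 p) (sq_nonneg (P (Q φ) p))]
    have hmain : ∫ p, ζ p * P (Q φ) p ≤ M := by
      refine le_of_forall_pos_le_add fun δ hδ => ?_
      set N : ℝ := ∫ p, Q (P ζ) p ^ 2 with hN
      have hN0 : 0 ≤ N := integral_nonneg fun p => sq_nonneg _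
      set s : ℝ := δ / (N + 1) with hsd
      have hs : 0 < s := by positivity
      obtain ⟨u, hu, huc, hu1, hu2⟩ := happ (s ^ 2) (by positivity)
      have e1 := hP.ibp2 hQ hΩ hφ hζ hζc hζs
      have e2 := hP.ibp2 hQ hΩ hu.contDiffOn hζ hζc hζs
      have e3 : ∫ p, Q (P ζ) p * φ p = ∫ p in Ω, Q (P ζ) p * φ p :=
        (setIntegral_eq_integral_of_forall_compl_eq_zero fun p hpn => by simp [hηz p hpn]).symm
      have e4 : ∫ p, Q (P ζ) p * u p = ∫ p in Ω, Q (P ζ) p * u p :=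
        (setIntegral_eq_integral_of_forall_compl_eq_zero fun p hpn => by simp [hηz p hpn]).symm
      have i1 : IntegrableOn (fun p => Q (P ζ) p * φ p) Ω := (hηm.restrict Ω).integrable_mul h0
      have i2 : IntegrableOn (fun p => Q (P ζ) p * u p) Ω :=
        ((hηm.integrable_mul (memLp_smc hu huc))).integrableOn
      have i3 := (h0.sub ((memLp_smc hu huc).restrict Ω)).integrable_sq
      have i4 : IntegrableOn (fun p => Q (P ζ) p ^ 2) Ω := hηm.integrable_sq.integrableOn
      have b1 : ∫ p in Ω, (Q (P ζ) p * φ p - Q (P ζ) p * u p) ≤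
          ∫ p in Ω, ((s / 2) * Q (P ζ) p ^ 2 + (1 / (2 * s)) * (φ p - u p) ^ 2) := by
        refine integral_mono (i1.sub i2) ((i4.const_mul _).add (i3.const_mul _)) fun p => ?_
        show Q (P ζ) p * φ p - Q (P ζ) p * u p ≤
          (s / 2) * Q (P ζ) p ^ 2 + (1 / (2 * s)) * (φ p - u p) ^ 2
        have : 0 ≤ (1 / (2 * s)) * (s * Q (P ζ) p - (φ p - u p)) ^ 2 := by positivity
        have e : (1 / (2 * s)) * (s * Q (P ζ) p - (φ p - u p)) ^ 2 =
          (s / 2) * Q (P ζ) p ^ 2 + (1 / (2 * s)) * (φ p - u p) ^ 2 -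
          (Q (P ζ) p * φ p - Q (P ζ) p * u p) := by field_simp; ring
        linarith
      have b2 : ∫ p in Ω, ((s / 2) * Q (P ζ) p ^ 2 + (1 / (2 * s)) * (φ p - u p) ^ 2) =
          (s / 2) * (∫ p in Ω, Q (P ζ) p ^ 2) + (1 / (2 * s)) * ∫ p in Ω, (φ p - u p) ^ 2 := by
        rw [← integral_const_mul, ← integral_const_mul]
        exact integral_add (i4.const_mul _) (i3.const_mul _)
      rw [integral_sub i1 i2] at b1
      have b3 : ∫ p in Ω, Q (P ζ) p ^ 2 ≤ N :=
        setIntegral_le_integral hηm.integrable_sq (Filter.Eventually.of_forall fun p => sq_nonneg _)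
      have b4 : (1 / (2 * s)) * ∫ p in Ω, (φ p - u p) ^ 2 ≤ s / 2 := by
        calc _ ≤ (1 / (2 * s)) * s ^ 2 := by gcongr
          _ = s / 2 := by field_simp
      have b5 : (s / 2) * (∫ p in Ω, Q (P ζ) p ^ 2) ≤ (s / 2) * N := by gcongr
      have hHi : Integrable (fun p => hess2 u p + gradSq u p + u p ^ 2) := by
        refine integrable_of_smc (((hu.hess2.add hu.gradSq).add (hu.pow 2)))
          (HasCompactSupport.intro huc fun p hp => ?_)
        obtain ⟨a, b, c, d, e, f, g⟩ := all_zero hp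
        simp [gradSq, hess2, a, b, c, d, e, f, g]
      have i5 : Integrable (fun p => ζ p * P (Q u) p) :=
        integrable_of_smc (hζ.mul (hP.sm _ (hQ.sm _ hu))) hζc.mul_right
      have e5 : ∫ p, ζ p * P (Q u) p = ∫ p in Ω, ζ p * P (Q u) p :=
        (setIntegral_eq_integral_of_forall_compl_eq_zero fun p hpn => by
          simp [image_eq_zero_of_notMem_tsupport (fun h => hpn (hζs h))]).symm
      have b6 : ∫ p in Ω, ζ p * P (Q u) p ≤ ∫ p in Ω, ((1 / 2) * (ζ p * P (Q φ) p) +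
          (1 / 2) * (hess2 u p + gradSq u p + u p ^ 2)) := by
        refine integral_mono i5.integrableOn ((hI.const_mul _).add (hHi.const_mul _)).integrableOn
          fun p => ?_
        show ζ p * P (Q u) p ≤ (1 / 2) * (ζ p * P (Q φ) p) +
          (1 / 2) * (hess2 u p + gradSq u p + u p ^ 2)
        simp only [hζd]
        have a1 := hPQ u p
        have a2 : 0 ≤ gradSq u p := by unfold gradSq; positivity
        have a3 := mul_nonneg (h4 p) (sq_nonneg (P (Q φ) p - P (Q u) p))
        have a4 := mul_nonneg (sub_nonneg.2 (h5 p)) (sq_nonneg (P (Q u) p))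
        nlinarith [sq_nonneg (u p)]
      rw [integral_add (hI.const_mul _).integrableOn (hHi.const_mul _).integrableOn,
        integral_const_mul, integral_const_mul] at b6
      have b7 : ∫ p in Ω, ζ p * P (Q φ) p ≤ ∫ p, ζ p * P (Q φ) p :=
        setIntegral_le_integral hI (Filter.Eventually.of_forall hnn)
      have hsN : s * (N + 1) = δ := by rw [hsd]; field_simp
      nlinarith
    calc ∫⁻ p in K, ENNReal.ofReal (P (Q φ) p ^ 2)
        ≤ ∫⁻ p in K, ENNReal.ofReal (ζ p * P (Q φ) p) := by
          refine lintegral_mono_ae ?_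
          filter_upwards [ae_restrict_mem hK.measurableSet] with p hpK
          refine ENNReal.ofReal_le_ofReal ?_
          simp only [hζd, hU1 p (hKU hpK)]
          rw [one_mul, sq]
      _ ≤ ∫⁻ p, ENNReal.ofReal (ζ p * P (Q φ) p) := setLIntegral_le_lintegral _ _
      _ = ENNReal.ofReal (∫ p, ζ p * P (Q φ) p) :=
          (ofReal_integral_eq_lintegral_ofReal hI (Filter.Eventually.of_forall hnn)).symm
      _ ≤ ENNReal.ofReal M := ENNReal.ofReal_le_ofReal hmain
  obtain ⟨F, hFc, hFs, hFU, hFm⟩ := hΩ.exists_iUnion_isClosed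
  have hfin : ∫⁻ p in Ω, ENNReal.ofReal (P (Q φ) p ^ 2) ≤ ENNReal.ofReal M := by
    rw [← hFU, setLIntegral_iUnion_of_directed _ hFm.directed_le]
    exact iSup_le fun n => key _ (Metric.isCompact_of_isClosed_isBounded (hFc n)
      (hbd.subset (hFs n))) (hFs n)
  refine ⟨(hp.continuousOn.aestronglyMeasurable hΩm).pow 2, ?_⟩
  rw [hasFiniteIntegral_iff_ofReal (Filter.Eventually.of_forall fun p => sq_nonneg _)]
  exact hfin.trans_lt ENNReal.ofReal_lt_top


/-! ### Boundedness -/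

lemma hasDerivAt_line {f : ℝ × ℝ → ℝ} (hf : Sm f) (x y : ℝ × ℝ) (t : ℝ) :
    HasDerivAt (fun s : ℝ => f ((1 - s) • x + s • y))
      ((y.1 - x.1) * pdx f ((1 - t) • x + t • y) + (y.2 - x.2) * pdy f ((1 - t) • x + t • y)) t := by
  have h1 : HasDerivAt (fun s : ℝ => (1 - s) • x + s • y) (y - x) t := by
    have a := (((hasDerivAt_id t).const_sub 1).smul_const x).add ((hasDerivAt_id t).smul_const y)
    refine a.congr_deriv ?_
    simp [sub_eq_add_neg, add_comm]
  have h2 := (hf.diff ((1 - t) • x + t • y)).hasFDerivAt.comp_hasDerivAt t h1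
  refine h2.congr_deriv ?_
  have e : y - x = (y.1 - x.1) • ((1 : ℝ), (0 : ℝ)) + (y.2 - x.2) • ((0 : ℝ), (1 : ℝ)) := by
    ext <;> simp
  rw [e, map_add, map_smul, map_smul]
  simp [pdx, pdy]

/-- Second derivative along a segment. -/
def hessDir (u : ℝ × ℝ → ℝ) (x y z : ℝ × ℝ) : ℝ :=
  (y.1 - x.1) * ((y.1 - x.1) * pdx (pdx u) z + (y.2 - x.2) * pdy (pdx u) z) +
    (y.2 - x.2) * ((y.1 - x.1) * pdx (pdy u) z + (y.2 - x.2) * pdy (pdy u) z)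

lemma taylor_line {u : ℝ × ℝ → ℝ} (hu : Sm u) (x y : ℝ × ℝ) :
    u x = u y - ((y.1 - x.1) * pdx u y + (y.2 - x.2) * pdy u y) +
      ∫ t in (0 : ℝ)..1, t * hessDir u x y ((1 - t) • x + t • y) := by
  have hd : ∀ t : ℝ, HasDerivAt (fun s : ℝ => s * ((y.1 - x.1) * pdx u ((1 - s) • x + s • y) +
      (y.2 - x.2) * pdy u ((1 - s) • x + s • y)) - u ((1 - s) • x + s • y))
      (t * hessDir u x y ((1 - t) • x + t • y)) t := by
    intro t
    have h1 := ((hasDerivAt_line hu.pdx x y t).const_mul (y.1 - x.1)).add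
      ((hasDerivAt_line hu.pdy x y t).const_mul (y.2 - x.2))
    have h2 := ((hasDerivAt_id t).mul h1).sub (hasDerivAt_line hu x y t)
    refine h2.congr_deriv ?_
    simp only [hessDir, id, Pi.add_apply]
    ring
  have hc : Continuous (fun t : ℝ => t * hessDir u x y ((1 - t) • x + t • y)) := by
    have a1 := hu.pdx.pdx.continuous
    have a2 := hu.pdx.pdy.continuous
    have a3 := hu.pdy.pdx.continuous
    have a4 := hu.pdy.pdy.continuous
    unfold hessDir
    fun_prop
  rw [intervalIntegral.integral_eq_sub_of_hasDerivAt (fun t _ => hd t) (hc.intervalIntegrable _ _)]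
  simp only [sub_self, zero_smul, one_smul, zero_add, add_zero, sub_zero, one_mul, zero_mul]
  ring

lemma hessDir_le {u : ℝ × ℝ → ℝ} {x y z : ℝ × ℝ} {d t : ℝ} (h1 : |y.1 - x.1| ≤ d)
    (h2 : |y.2 - x.2| ≤ d) (ht : 0 ≤ t) :
    |t * hessDir u x y z| ≤ d ^ 2 * (2 + t ^ 2 * hess2 u z) := by
  have hd : 0 ≤ d := (abs_nonneg _).trans h1
  have key : ∀ a b c : ℝ, |a| ≤ d → |b| ≤ d → |t * (a * (b * c))| ≤ d ^ 2 * (1 / 2 + t ^ 2 * c ^ 2 / 2) := by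
    intro a b c ha hb
    have e : |t * (a * (b * c))| = (|a| * |b|) * (t * |c|) := by
      rw [abs_mul, abs_mul, abs_mul, abs_of_nonneg ht]; ring
    rw [e]
    have p1 : |a| * |b| ≤ d ^ 2 := by rw [sq]; gcongr
    have p2 : t * |c| ≤ 1 / 2 + t ^ 2 * c ^ 2 / 2 := by
      have := sq_nonneg (t * |c| - 1)
      have h3 := sq_abs c
      nlinarith
    have := abs_nonneg c
    gcongr
  have k1 := key _ _ (pdx (pdx u) z) h1 h1
  have k2 := key _ _ (pdy (pdx u) z) h1 h2
  have k3 := key _ _ (pdx (pdy u) z) h2 h1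
  have k4 := key _ _ (pdy (pdy u) z) h2 h2
  have e : t * hessDir u x y z =
      t * ((y.1 - x.1) * ((y.1 - x.1) * pdx (pdx u) z)) +
      t * ((y.1 - x.1) * ((y.2 - x.2) * pdy (pdx u) z)) +
      (t * ((y.2 - x.2) * ((y.1 - x.1) * pdx (pdy u) z)) +
      t * ((y.2 - x.2) * ((y.2 - x.2) * pdy (pdy u) z))) := by unfold hessDir; ring
  rw [e]
  refine (abs_add_le _ _).trans ((add_le_add (abs_add_le _ _) (abs_add_le _ _)).trans ?_)
  have hnn : 0 ≤ d ^ 2 * (t ^ 2 * hess2 u z) := by unfold hess2; positivity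
  have e2 : d ^ 2 * (2 + t ^ 2 * hess2 u z) = d ^ 2 * (1 / 2 + t ^ 2 * pdx (pdx u) z ^ 2 / 2) +
     d ^ 2 * (1 / 2 + t ^ 2 * pdy (pdx u) z ^ 2 / 2) + (d ^ 2 * (1 / 2 + t ^ 2 * pdx (pdy u) z ^ 2 / 2)
     + d ^ 2 * (1 / 2 + t ^ 2 * pdy (pdy u) z ^ 2 / 2)) + d ^ 2 * (t ^ 2 * hess2 u z) / 2 := by
    unfold hess2; ring
  linarith

lemma sup_bound {Ω : Set (ℝ × ℝ)} (hΩ : IsOpen Ω) (hcv : Convex ℝ Ω) {u : ℝ × ℝ → ℝ} {M d r : ℝ}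
    {p0 : ℝ × ℝ} (hB : Metric.closedBall p0 r ⊆ Ω)
    (hd : ∀ x ∈ Ω, ∀ y ∈ Ω, |y.1 - x.1| ≤ d ∧ |y.2 - x.2| ≤ d)
    (hu : Sm u) (huc : HasCompactSupport u)
    (hM : ∫ p in Ω, (hess2 u p + gradSq u p + u p ^ 2) ≤ M) {x : ℝ × ℝ} (hx : x ∈ Ω) :
    volume.real (Metric.closedBall p0 r) * |u x| ≤
      (1 + d + d ^ 2) * (2 * volume.real (Metric.closedBall p0 r) + M) := by
  have hΩm := hΩ.measurableSet
  set S := Metric.closedBall p0 r with hS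
  have hSc : IsCompact S := isCompact_closedBall _ _
  have hSm : MeasurableSet S := hSc.measurableSet
  have hSf : volume S ≠ ⊤ := hSc.measure_lt_top.ne
  have hd0 : 0 ≤ d := (abs_nonneg _).trans (hd x hx x hx).1
  have hh0 : ∀ p, 0 ≤ hess2 u p := fun p => by unfold hess2; positivity
  have hg0 : ∀ p, 0 ≤ gradSq u p := fun p => by unfold gradSq; positivity
  have hHi : Integrable (fun p => hess2 u p + gradSq u p + u p ^ 2) := by
    refine integrable_of_smc (((hu.hess2.add hu.gradSq).add (hu.pow 2)))
      (HasCompactSupport.intro huc fun p hp => ?_)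
    obtain ⟨a, b, c, d, e, f, g⟩ := all_zero hp
    simp [gradSq, hess2, a, b, c, d, e, f, g]
  have hM1 : ∫ p in Ω, hess2 u p ≤ M := by
    refine le_trans (integral_mono_of_nonneg (Filter.Eventually.of_forall hh0) hHi.integrableOn
      (Filter.Eventually.of_forall fun p => ?_)) hM
    show hess2 u p ≤ hess2 u p + gradSq u p + u p ^ 2
    nlinarith [hg0 p, sq_nonneg (u p)]
  have hhi : IntegrableOn (hess2 u) Ω := by
    refine hHi.integrableOn.mono' hu.hess2.continuous.aestronglyMeasurable
      (Filter.Eventually.of_forall fun p => ?_)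
    rw [Real.norm_of_nonneg (hh0 p)]
    nlinarith [hg0 p, sq_nonneg (u p)]
  have hM2 : ∫ p in S, (hess2 u p + gradSq u p + u p ^ 2) ≤ M :=
    le_trans (setIntegral_mono_set hHi.integrableOn (Filter.Eventually.of_forall fun p => by
      have := hh0 p; have := hg0 p; positivity) hB.eventuallyLE) hM
  set T : ℝ × ℝ → ℝ := fun y => u y - ((y.1 - x.1) * pdx u y + (y.2 - x.2) * pdy u y) with hT
  set H : ℝ × ℝ → ℝ → ℝ := fun y t => t * hessDir u x y ((1 - t) • x + t • y) with hH
  have cx := hu.pdx.continuous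
  have cy := hu.pdy.continuous
  have cu := hu.continuous
  have hTc : Continuous T := by fun_prop
  have hHc : Continuous (Function.uncurry H) := by
    have a1 := hu.pdx.pdx.continuous
    have a2 := hu.pdx.pdy.continuous
    have a3 := hu.pdy.pdx.continuous
    have a4 := hu.pdy.pdy.continuous
    simp only [hH, hessDir, Function.uncurry_def]
    fun_prop
  have hTi : IntegrableOn T S := hTc.continuousOn.integrableOn_compact hSc
  have hHI : Integrable (Function.uncurry H)
      ((volume.restrict S).prod (volume.restrict (Icc (0 : ℝ) 1))) := by
    rw [Measure.prod_restrict]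
    exact hHc.continuousOn.integrableOn_compact (hSc.prod isCompact_Icc)
  have e0 : ∀ y, u x = T y + ∫ t in Icc (0 : ℝ) 1, H y t := fun y => by
    rw [integral_Icc_eq_integral_Ioc, ← intervalIntegral.integral_of_le zero_le_one]
    exact taylor_line hu x y
  have e1 : volume.real S * u x = (∫ y in S, T y) + ∫ t in Icc (0 : ℝ) 1, ∫ y in S, H y t := by
    have iH : Integrable (fun y => ∫ t in Icc (0 : ℝ) 1, H y t) (volume.restrict S) :=
      hHI.integral_prod_left
    rw [← integral_integral_swap hHI, ← integral_add hTi iH]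
    rw [setIntegral_congr_fun hSm (g := fun _ => u x) (fun y _ => (e0 y).symm)]
    simp
  have b1 : |∫ y in S, T y| ≤ (1 + d) * (volume.real S + M) := by
    have ic : Integrable (fun _ : ℝ × ℝ => (1 : ℝ)) (volume.restrict S) := integrableOn_const hSf
    have hi : IntegrableOn (fun y => (1 + d) * (1 + (hess2 u y + gradSq u y + u y ^ 2))) S :=
      ((integrableOn_const hSf).add hHi.integrableOn).const_mul _
    have := norm_integral_le_of_norm_le hi (f := T) (by
      filter_upwards [ae_restrict_mem hSm] with y hy
      obtain ⟨q1, q2⟩ := hd x hx y (hB hy)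
      rw [Real.norm_eq_abs]
      simp only [hT]
      have s1 : |(y.1 - x.1) * pdx u y| ≤ d * (1 / 2 + pdx u y ^ 2 / 2) := by
        rw [abs_mul]
        have : |pdx u y| ≤ 1 / 2 + pdx u y ^ 2 / 2 := by
          nlinarith [sq_nonneg (|pdx u y| - 1), sq_abs (pdx u y)]
        gcongr
      have s2 : |(y.2 - x.2) * pdy u y| ≤ d * (1 / 2 + pdy u y ^ 2 / 2) := by
        rw [abs_mul]
        have : |pdy u y| ≤ 1 / 2 + pdy u y ^ 2 / 2 := by
          nlinarith [sq_nonneg (|pdy u y| - 1), sq_abs (pdy u y)]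
        gcongr
      have s3 : |u y| ≤ 1 + u y ^ 2 := by
        nlinarith [sq_nonneg (|u y| - 1), sq_abs (u y)]
      refine (abs_sub _ _).trans ((add_le_add s3 ((abs_add_le _ _).trans (add_le_add s1 s2))).trans ?_)
      have n1 := hh0 y
      have n2 := mul_nonneg hd0 n1
      have n3 := mul_nonneg hd0 (sq_nonneg (u y))
      have n4 := mul_nonneg hd0 (hg0 y)
      have n5 := hg0 y
      have e : d * (1 / 2 + pdx u y ^ 2 / 2) + d * (1 / 2 + pdy u y ^ 2 / 2) =
        d + d * gradSq u y / 2 := by unfold gradSq; ring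
      rw [e]
      nlinarith)
    rw [Real.norm_eq_abs, integral_const_mul, integral_add ic
      hHi.integrableOn] at this
    refine this.trans ?_
    have e : ∫ y in S, (1 : ℝ) = volume.real S := by simp
    rw [e]
    gcongr
  have b2 : ∀ t ∈ Ioc (0 : ℝ) 1, ‖∫ y in S, H y t‖ ≤ d ^ 2 * (2 * volume.real S + M) := by
    intro t ht
    have hmap : ∀ y ∈ S, (1 - t) • x + t • y ∈ Ω := fun y hy =>
      hcv hx (hB hy) (by linarith [ht.2]) ht.1.le (by ring)
    obtain ⟨i1, i2⟩ := scale_le hSm hΩm ht.1 hmap hhi hh0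
    have ic : Integrable (fun _ : ℝ × ℝ => (2 : ℝ)) (volume.restrict S) := integrableOn_const hSf
    have hi : IntegrableOn (fun y => d ^ 2 * (2 + t ^ 2 * hess2 u ((1 - t) • x + t • y))) S :=
      ((integrableOn_const hSf).add (i1.const_mul _)).const_mul _
    have := norm_integral_le_of_norm_le hi (f := fun y => H y t) (by
      filter_upwards [ae_restrict_mem hSm] with y hy
      obtain ⟨q1, q2⟩ := hd x hx y (hB hy)
      exact hessDir_le q1 q2 ht.1.le)
    refine this.trans ?_
    rw [integral_const_mul, integral_add ic (i1.const_mul _), integral_const_mul]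
    have e : ∫ y in S, (2 : ℝ) = 2 * volume.real S := by simp [mul_comm]
    rw [e]
    have ht2 : t ^ 2 ≠ 0 := by have := ht.1; positivity
    have : t ^ 2 * ∫ y in S, hess2 u ((1 - t) • x + t • y) ≤ M := by
      calc _ ≤ t ^ 2 * ((t ^ 2)⁻¹ * ∫ y in Ω, hess2 u y) := by gcongr
        _ = ∫ y in Ω, hess2 u y := by rw [mul_inv_cancel_left₀ ht2]
        _ ≤ M := hM1
    gcongr
  have b3 : |∫ t in Icc (0 : ℝ) 1, ∫ y in S, H y t| ≤ d ^ 2 * (2 * volume.real S + M) := by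
    rw [integral_Icc_eq_integral_Ioc, ← Real.norm_eq_abs]
    have := norm_setIntegral_le_of_norm_le_const (μ := volume) (s := Ioc (0 : ℝ) 1) (by simp) b2
    simpa using this
  have hSn : 0 ≤ volume.real S := measureReal_nonneg
  have : volume.real S * |u x| = |volume.real S * u x| := by rw [abs_mul, abs_of_nonneg hSn]
  rw [this, e1]
  refine (abs_add_le _ _).trans ?_
  nlinarith [mul_nonneg (add_nonneg zero_le_one hd0) hSn]

lemma bounded_of_approx {Ω : Set (ℝ × ℝ)} (hΩ : IsOpen Ω) (hcv : Convex ℝ Ω)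
    (hbd : Bornology.IsBounded Ω) (hne : Ω.Nonempty) {φ : ℝ × ℝ → ℝ}
    (hφ : ContDiffOn ℝ (⊤ : ℕ∞) φ Ω) (hL2 : IntegrableOn (fun p => φ p ^ 2) Ω) {M : ℝ}
    (happ : ∀ ε : ℝ, 0 < ε → ∃ u, Sm u ∧ HasCompactSupport u ∧
      ∫ p in Ω, (φ p - u p) ^ 2 ≤ ε ∧ ∫ p in Ω, (hess2 u p + gradSq u p + u p ^ 2) ≤ M) :
    ∃ C : ℝ, ∀ p ∈ Ω, |φ p| ≤ C := by
  have hΩm := hΩ.measurableSet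
  have h0 : MemLp φ 2 (volume.restrict Ω) :=
    (memLp_two_iff_integrable_sq (hφ.continuousOn.aestronglyMeasurable hΩm)).2 hL2
  obtain ⟨p0, hp0⟩ := hne
  obtain ⟨r, hr, hB⟩ := Metric.nhds_basis_closedBall.mem_iff.1 (hΩ.mem_nhds hp0)
  obtain ⟨d, hd⟩ := Metric.isBounded_iff.1 hbd
  have hd' : ∀ x ∈ Ω, ∀ y ∈ Ω, |y.1 - x.1| ≤ d ∧ |y.2 - x.2| ≤ d := fun x hx y hy => by
    have := hd hy hx
    rw [Prod.dist_eq, max_le_iff, Real.dist_eq, Real.dist_eq] at this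
    exact this
  set m := volume.real (Metric.closedBall p0 r) with hm
  have hmp : 0 < m := ENNReal.toReal_pos (Metric.measure_closedBall_pos volume p0 hr).ne'
    measure_closedBall_lt_top.ne
  set C := (1 + d + d ^ 2) * (2 * m + M) / m with hC
  refine ⟨C + 1, fun x0 hx0 => ?_⟩
  by_contra! hlt
  have hcont : ContinuousAt (fun p => |φ p|) x0 :=
    (hφ.continuousOn.continuousAt (hΩ.mem_nhds hx0)).abs
  obtain ⟨ρ, hρ, hN⟩ := Metric.nhds_basis_closedBall.mem_iff.1
    (Filter.inter_mem (hΩ.mem_nhds hx0) (hcont.eventually (lt_mem_nhds hlt)))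
  set n := volume.real (Metric.closedBall x0 ρ) with hn
  have hnp : 0 < n := ENNReal.toReal_pos (Metric.measure_closedBall_pos volume x0 hρ).ne'
    measure_closedBall_lt_top.ne
  obtain ⟨u, hu, huc, hu1, hu2⟩ := happ (n / 2) (by positivity)
  have hub : ∀ p ∈ Ω, |u p| ≤ C := fun p hp => by
    rw [hC, le_div_iff₀ hmp, mul_comm]
    exact sup_bound hΩ hcv hB hd' hu huc hu2 hp
  have iu := (h0.sub ((memLp_smc hu huc).restrict Ω)).integrable_sq
  have iu' : IntegrableOn (fun p => (φ p - u p) ^ 2) Ω := iu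
  have hNs : Metric.closedBall x0 ρ ⊆ Ω := fun p hp => (hN hp).1
  have h1 : ∫ p in Metric.closedBall x0 ρ, (φ p - u p) ^ 2 ≤ ∫ p in Ω, (φ p - u p) ^ 2 :=
    setIntegral_mono_set iu' (Filter.Eventually.of_forall fun p => sq_nonneg _) hNs.eventuallyLE
  have h2 : ∫ p in Metric.closedBall x0 ρ, (1 : ℝ) ≤
      ∫ p in Metric.closedBall x0 ρ, (φ p - u p) ^ 2 := by
    refine setIntegral_mono_on (integrableOn_const measure_closedBall_lt_top.ne) (iu'.mono_set hNs)
      measurableSet_closedBall fun p hp => ?_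
    have q1 : C + 1 < |φ p| := (hN hp).2
    have q2 := hub p (hNs hp)
    have q3 := abs_sub_abs_le_abs_sub (φ p) (u p)
    rw [← sq_abs]
    nlinarith
  have e : ∫ p in Metric.closedBall x0 ρ, (1 : ℝ) = n := by simp [hn]
  linarith

/-- A priori regularity (Grisvard + Sobolev embedding): a weak semiclassical Neumann
eigenfunction on a piecewise-smooth bounded convex planar domain is in `H²(Ω)` and is
bounded on `Ω` (with an `h`-dependent constant). -/
theorem neumann_apriori_regularity
    (D : PSConvexDomain) (h : ℝ) (hh : 0 < h) (φ : ℝ × ℝ → ℝ)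
    (hsm : ContDiffOn ℝ (⊤ : ℕ∞) φ D.Ω)
    (hL2 : IntegrableOn (fun p => (φ p) ^ 2) D.Ω)
    (hgrad : IntegrableOn (gradSq φ) D.Ω)
    (heig : ∀ p ∈ D.Ω, -(h ^ 2) * lap φ p = φ p)
    (hweak : ∀ v : ℝ × ℝ → ℝ, ContDiff ℝ (⊤ : ℕ∞) v → (∃ M : ℝ, ∀ p, |v p| ≤ M) →
      (∃ M : ℝ, ∀ p, ‖fderiv ℝ v p‖ ≤ M) →
      h ^ 2 * ∫ p in D.Ω, (pdx φ p * pdx v p + pdy φ p * pdy v p) =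
        ∫ p in D.Ω, φ p * v p) :
    (IntegrableOn (fun p => (pdx (pdx φ) p) ^ 2) D.Ω ∧
      IntegrableOn (fun p => (pdx (pdy φ) p) ^ 2) D.Ω ∧
      IntegrableOn (fun p => (pdy (pdx φ) p) ^ 2) D.Ω ∧
      IntegrableOn (fun p => (pdy (pdy φ) p) ^ 2) D.Ω) ∧
    ∃ C : ℝ, ∀ p ∈ D.Ω, |φ p| ≤ C := by
  obtain ⟨M, -, happ⟩ := main_approx D.isOpen D.convex D.bounded D.nonempty hh hsm hL2 hgrad hweak
  have hb := D.bounded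
  refine ⟨⟨?_, ?_, ?_, ?_⟩, bounded_of_approx D.isOpen D.convex hb D.nonempty hsm hL2 happ⟩
  · refine second_int pdop_x pdop_x (fun u p => ?_) D.isOpen hb hsm hL2 happ
    have h1 := sq_nonneg (pdx (pdy u) p)
    have h2 := sq_nonneg (pdy (pdx u) p)
    have h3 := sq_nonneg (pdy (pdy u) p)
    unfold hess2
    linarith
  · refine second_int pdop_x pdop_y (fun u p => ?_) D.isOpen hb hsm hL2 happ
    have h1 := sq_nonneg (pdx (pdx u) p)
    have h2 := sq_nonneg (pdy (pdx u) p)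
    have h3 := sq_nonneg (pdy (pdy u) p)
    unfold hess2
    linarith
  · refine second_int pdop_y pdop_x (fun u p => ?_) D.isOpen hb hsm hL2 happ
    have h1 := sq_nonneg (pdx (pdy u) p)
    have h2 := sq_nonneg (pdx (pdx u) p)
    have h3 := sq_nonneg (pdy (pdy u) p)
    unfold hess2
    linarith
  · refine second_int pdop_y pdop_y (fun u p => ?_) D.isOpen hb hsm hL2 happ
    have h1 := sq_nonneg (pdx (pdy u) p)
    have h2 := sq_nonneg (pdy (pdx u) p)
    have h3 := sq_nonneg (pdx (pdx u) p)
    unfold hess2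
    linarith
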